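/- arXiv:2002.01790 — 2 statements merged into one kernel-verified Lean document; each statement's English description precedes it below -/
import Mathlib

section
/- There exists a constant C(d) depending only on d such that for every U ⊆ (B_2^n)^{d−1} × T and every p ≥ 1: F_A(U) ≤ C(d) ( √p · Δ_A(U) + Σ_{k=0}^{d−1} p^{(k+1−d)/2} s_k(A) ). -/
/-!
Write `⟨g, V(x, t)⟩` for the Gaussian process whose supremum over `U` has mean `F_A(U)`. For fixed
`t`, the vector `V(x, t)` is multilinear in `x = (x², …, x^d)` (`polyV`), so smoothing `x` by
`σ h`, with `h` standard Gaussian and `σ = p^{-1/2}`, keeps the mean: `E_h V(x + σ h, t) = V(x, t)`.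

For a fixed `y`, Maurey's property `(τ)` of the Gaussian measure (`maurey_property`, deduced from
the one-dimensional Prékopa–Leindler inequality) bounds the mean of the penalised exponential
`sup_t exp(λ⟨g, V(y, t) - w⟩ - λ²|V(y, t) - w|²)` by `exp(λ E sup_t ⟨g, V(y, t)⟩)`; this is
`wills_bound`. Averaging the normalised exponentials over a Gaussian prior on `y` of variance `σ²`
gives one random variable `Z` of mean at most `1`. Moving the prior to `x` by the Cameron–Martin
formula and applying Jensen's inequality bounds the process at all points `(x, t)` simultaneously
in terms of the same `Z` (`exists_variational_bound`). After integration
(`integral_sSup_le_of_smoothing`),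

  `F_A(U) ≤ D / (2 σ² λ) + λ R + S`,

where `D` bounds `|x|²`, `R` bounds `E_h |V(x + σ h, t) - w|²`, and `S` bounds the smoothed
conditional suprema `E_h E_g sup_t ⟨g, V(x + σ h, t)⟩`.

With `w` the value of `V` at a point of `U`, `R` is at most `Δ_A(U)²` plus the squared
Hilbert–Schmidt norms of the partial contractions of `A`, weighted by `σ^{2|I|}` for the nonempty
sets `I` of smoothed coordinates (`integral_polyV_sub_sq`). Each of these is at most the
square of the norm `‖A‖_{∅|P}` in which `P` has the block `{1} ∪ I` and singletons
(`sqrt_sum_partQ_le`). Expanding `V(x + σ h, t)` multilinearly bounds `S` by the norms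
`‖A‖_{P'|P}` with singleton blocks only, `P'` holding `{1}` and the smoothed coordinates
(`integral_supMean_affine_le`, `integral_supMean_mixV_le`). The powers of `σ` are those in the
statement, and `λ = √p / r`, where `r²` bounds `R`, balances the first two terms.
-/

open MeasureTheory ProbabilityTheory
open scoped Classical

noncomputable section

/-- product of i.i.d. standard Gaussians indexed by `ι`. -/
def stdGaussian (ι : Type*) [Fintype ι] : Measure (ι → ℝ) :=
  Measure.pi fun _ => gaussianReal 0 1

/-- Index type for block Gaussians. -/
abbrev GIdx (d n : ℕ) := Σ J : Finset (Fin d), ({l // l ∈ J} → Fin n)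

def IsPartition {d : ℕ} (J : Finset (Fin d)) (P : Finset (Finset (Fin d))) : Prop :=
  (∀ I ∈ P, I.Nonempty) ∧ (∀ I ∈ P, ∀ I' ∈ P, I ≠ I' → Disjoint I I') ∧ P.sup id = J

def IsPartitionPair {d : ℕ} (S : Finset (Fin d)) (P P' : Finset (Finset (Fin d))) : Prop :=
  Disjoint P P' ∧ IsPartition S (P ∪ P')

/-- nonzero coordinates of `Fin (d+1)`: the coordinates `2,…,d` of the paper. -/
abbrev PIdx (d : ℕ) : Type := {k : Fin (d + 1) // k ≠ 0}

/-- a point of `(ℝ^n)^{d-1} × ℝ^m`. -/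
abbrev Pt (n m d : ℕ) : Type := (PIdx d → Fin n → ℝ) × (Fin m → ℝ)

/-- assembling a full multi-index out of its first coordinate and the rest. -/
def ext0 {n d : ℕ} (i1 : Fin n) (i' : PIdx d → Fin n) : Fin (d + 1) → Fin n :=
  fun k => if h : k = 0 then i1 else i' ⟨k, h⟩

/-- `‖A‖_{P'∣P}` for an array with values indexed by `Fin m`, relative to `T ⊆ ℝ^m`. -/
def chaosNormT {n m d : ℕ} (A : (Fin (d + 1) → Fin n) → Fin m → ℝ)
    (T : Set (Fin m → ℝ)) (P' P : Finset (Finset (Fin (d + 1)))) : ℝ :=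
  sSup { r : ℝ | ∃ x : (I : Finset (Fin (d + 1))) → ({l // l ∈ I} → Fin n) → ℝ,
    (∀ I ∈ P, ∑ v : {l // l ∈ I} → Fin n, x I v ^ 2 ≤ 1) ∧
    r = ∫ ω : GIdx (d + 1) n → ℝ,
        sSup { s : ℝ | ∃ t ∈ T, s = ∑ i : Fin (d + 1) → Fin n, ∑ j : Fin m,
          (∏ I ∈ P, x I fun l => i l.1) * (∏ J ∈ P', ω ⟨J, fun l => i l.1⟩) *
            A i j * t j }
        ∂ stdGaussian (GIdx (d + 1) n) }

/-- `s_k(A)`. -/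
def sNorm {n m d : ℕ} (A : (Fin (d + 1) → Fin n) → Fin m → ℝ)
    (T : Set (Fin m → ℝ)) (k : ℕ) : ℝ :=
  ∑ PP ∈ Finset.univ.filter (fun PP :
      Finset (Finset (Fin (d + 1))) × Finset (Finset (Fin (d + 1))) =>
      IsPartitionPair Finset.univ PP.1 PP.2 ∧ PP.1.card = k),
    chaosNormT A T PP.2 PP.1

/-- the pseudometric `ρ_A`. -/
def rhoA {n m d : ℕ} (A : (Fin (d + 1) → Fin n) → Fin m → ℝ) (z w : Pt n m d) : ℝ :=
  Real.sqrt (∑ i1 : Fin n,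
    (∑ i' : PIdx d → Fin n, ∑ j : Fin m, A (ext0 i1 i') j *
      ((∏ k, w.1 k (i' k)) * w.2 j - (∏ k, z.1 k (i' k)) * z.2 j)) ^ 2)

/-- `N(S, ρ, ε)`: the minimal number of closed balls of diameter `ε` (radius `ε/2`)
covering `S`. -/
def covNum {β : Type*} (S : Set β) (ρ : β → β → ℝ) (ε : ℝ) : ℝ :=
  sInf { N : ℝ | ∃ c : Finset β, (c.card : ℝ) = N ∧
    S ⊆ ⋃ x ∈ c, { y | ρ x y ≤ ε / 2 } }

/-- `F_A(U)`. -/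
def FA {n m d : ℕ} (A : (Fin (d + 1) → Fin n) → Fin m → ℝ) (U : Set (Pt n m d)) : ℝ :=
  ∫ ω : Fin n → ℝ, sSup { s : ℝ | ∃ z ∈ U,
      s = ∑ i : Fin (d + 1) → Fin n, ∑ j : Fin m,
        ω (i 0) * (∏ k : PIdx d, z.1 k (i k.1)) * A i j * z.2 j }
    ∂ stdGaussian (Fin n)

/-- `Δ_A(U)`, the diameter of `U` with respect to `ρ_A`. -/
def DeltaA {n m d : ℕ} (A : (Fin (d + 1) → Fin n) → Fin m → ℝ)
    (U : Set (Pt n m d)) : ℝ :=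
  sSup { r : ℝ | ∃ z ∈ U, ∃ w ∈ U, r = rhoA A z w }

/-- `(B_2^n)^{d-1} × T`. -/
def ballSet (n m d : ℕ) (T : Set (Fin m → ℝ)) : Set (Pt n m d) :=
  { z | (∀ k, ∑ j, z.1 k j ^ 2 ≤ 1) ∧ z.2 ∈ T }

/-- `W^U_I(α_A)`. -/
def WUI {n m d : ℕ} (A : (Fin (d + 1) → Fin n) → Fin m → ℝ)
    (U : Set (Pt n m d)) (I : Finset (PIdx d)) : ℝ :=
  sSup { r : ℝ | ∃ z ∈ U, r = ∫ ω : PIdx d × Fin n → ℝ,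
    Real.sqrt (∑ i1 : Fin n, (∑ i' : PIdx d → Fin n, ∑ j : Fin m,
      A (ext0 i1 i') j *
        (∏ k : PIdx d, if k ∈ I then ω (k, i' k) else z.1 k (i' k)) * z.2 j) ^ 2)
    ∂ stdGaussian (PIdx d × Fin n) }

/-- `V^U_I(β_A)`. -/
def VUI {n m d : ℕ} (A : (Fin (d + 1) → Fin n) → Fin m → ℝ)
    (T : Set (Fin m → ℝ)) (U : Set (Pt n m d)) (I : Finset (PIdx d)) : ℝ :=
  sSup { r : ℝ | ∃ z ∈ U, r = ∫ ω : PIdx d × Fin n → ℝ,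
    (∫ g : Fin n → ℝ, sSup { s : ℝ | ∃ t' ∈ T,
        s = ∑ i1 : Fin n, ∑ i' : PIdx d → Fin n, ∑ j : Fin m,
          A (ext0 i1 i') j * g i1 *
            (∏ k : PIdx d, if k ∈ I then ω (k, i' k) else z.1 k (i' k)) * t' j }
      ∂ stdGaussian (Fin n))
    ∂ stdGaussian (PIdx d × Fin n) }

/-- `W^U_d(α_A, s)`. -/
def Wd {n m d : ℕ} (A : (Fin (d + 1) → Fin n) → Fin m → ℝ)
    (U : Set (Pt n m d)) (s : ℝ) : ℝ :=
  ∑ k ∈ Finset.Icc 1 d, s ^ k *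
    ∑ I ∈ Finset.univ.filter (fun I : Finset (PIdx d) => I.card = k), WUI A U I

/-- `V^U_d(β_A, s)`. -/
def Vd {n m d : ℕ} (A : (Fin (d + 1) → Fin n) → Fin m → ℝ)
    (T : Set (Fin m → ℝ)) (U : Set (Pt n m d)) (s : ℝ) : ℝ :=
  ∑ k ∈ Finset.range (d + 1), s ^ (k + 1) *
    ∑ I ∈ Finset.univ.filter (fun I : Finset (PIdx d) => I.card = k), VUI A T U I

/-- `‖A ⋅_j x_j‖_{P'∣P}`: the norm of the contraction of `A` in coordinate `j0`
against the vector `xj`. -/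
def chaosNormTFix {n m d : ℕ} (A : (Fin (d + 1) → Fin n) → Fin m → ℝ)
    (T : Set (Fin m → ℝ)) (P' P : Finset (Finset (Fin (d + 1))))
    (j0 : Fin (d + 1)) (xj : Fin n → ℝ) : ℝ :=
  sSup { r : ℝ | ∃ x : (I : Finset (Fin (d + 1))) → ({l // l ∈ I} → Fin n) → ℝ,
    (∀ I ∈ P, ∑ v : {l // l ∈ I} → Fin n, x I v ^ 2 ≤ 1) ∧
    r = ∫ ω : GIdx (d + 1) n → ℝ,
        sSup { s : ℝ | ∃ t ∈ T, s = ∑ i : Fin (d + 1) → Fin n, ∑ j : Fin m,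
          (∏ I ∈ P, x I fun l => i l.1) * xj (i j0) *
            (∏ J ∈ P', ω ⟨J, fun l => i l.1⟩) * A i j * t j }
        ∂ stdGaussian (GIdx (d + 1) n) }

/-- the norm `α̂_A`. -/
def hatAlpha {n m d : ℕ} (A : (Fin (d + 1) → Fin n) → Fin m → ℝ)
    (T : Set (Fin m → ℝ)) (x : PIdx d → Fin n → ℝ) : ℝ :=
  ∑ j : PIdx d,
    ∑ PP ∈ Finset.univ.filter (fun PP :
        Finset (Finset (Fin (d + 1))) × Finset (Finset (Fin (d + 1))) =>
        IsPartitionPair (Finset.univ.erase j.1) PP.1 PP.2 ∧ PP.1.card = d - 1),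
      chaosNormTFix A T PP.2 PP.1 j.1 (x j)

/-- `α̂_A(U)`. -/
def hatAlphaSup {n m d : ℕ} (A : (Fin (d + 1) → Fin n) → Fin m → ℝ)
    (T : Set (Fin m → ℝ)) (U : Set (Pt n m d)) : ℝ :=
  sSup { r : ℝ | ∃ z ∈ U, r = hatAlpha A T z.1 }

end

open scoped ENNReal

/-! ### The Prékopa–Leindler inequality and Maurey's property -/

/-- One-dimensional Brunn–Minkowski for compact sets: translates of `K` and `L` sharing only the
point `max K + min L` sit inside the sumset. -/
lemma volume_add_le_of_compact {K L S : Set ℝ} (hK : IsCompact K) (hL : IsCompact L)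
    (hK0 : K.Nonempty) (hL0 : L.Nonempty) (hS : ∀ a ∈ K, ∀ b ∈ L, a + b ∈ S) :
    volume K + volume L ≤ volume S := by
  obtain ⟨a, haK, ha⟩ := hK.exists_isGreatest hK0
  obtain ⟨b, hbL, hb⟩ := hL.exists_isLeast hL0
  have h1 : volume ((fun x => x + b) '' K) = volume K := by
    simp
  have h2 : volume ((fun x => a + x) '' L) = volume L := by
    simp
  have hmeas : MeasurableSet ((fun x => a + x) '' L) :=
    (hL.image (by fun_prop)).measurableSet
  have hinter : volume (((fun x => x + b) '' K) ∩ ((fun x => a + x) '' L)) = 0 := by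
    refine measure_mono_null (t := {a + b}) ?_ (by simp)
    rintro x ⟨⟨u, hu, rfl⟩, ⟨v, hv, hx⟩⟩
    have := ha hu
    have := hb hv
    simp only [Set.mem_singleton_iff] at *
    linarith
  rw [← h1, ← h2, ← measure_union_add_inter _ hmeas, hinter, add_zero]
  refine measure_mono ?_
  rintro x (⟨u, hu, rfl⟩ | ⟨v, hv, rfl⟩)
  · exact hS _ hu _ hbL
  · exact hS _ haK _ hv

lemma volume_add_le_of_midpoint {K L S : Set ℝ} (hK : MeasurableSet K) (hL : MeasurableSet L)
    (hK0 : K.Nonempty) (hL0 : L.Nonempty) (hS : ∀ a ∈ K, ∀ b ∈ L, (a + b) / 2 ∈ S) :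
    volume K + volume L ≤ 2 * volume S := by
  have hS2 : volume ((fun x : ℝ => x * 2⁻¹) ⁻¹' S) = 2 * volume S := by
    rw [Real.volume_preimage_mul_right (by norm_num)]
    norm_num
  rw [← hS2, hK.measure_eq_iSup_isCompact, hL.measure_eq_iSup_isCompact]
  obtain ⟨a, ha⟩ := hK0
  obtain ⟨b, hb⟩ := hL0
  simp only [iSup_and']
  refine ENNReal.biSup_add_biSup_le' (p := fun C => C ⊆ K ∧ IsCompact C)
    (q := fun C => C ⊆ L ∧ IsCompact C) ⟨∅, by simp⟩ ⟨∅, by simp⟩ ?_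
  rintro C ⟨hCK, hC⟩ D ⟨hDL, hD⟩
  -- adjoining a point makes the compact sets nonempty
  refine (add_le_add (measure_mono (Set.subset_insert a C))
    (measure_mono (Set.subset_insert b D))).trans ?_
  refine volume_add_le_of_compact (hC.insert a) (hD.insert b) ⟨a, by simp⟩ ⟨b, by simp⟩ ?_
  intro u hu v hv
  have := hS u (Set.insert_subset ha hCK hu) v (Set.insert_subset hb hDL hv)
  simpa [div_eq_mul_inv] using this

/-- One-dimensional Prékopa–Leindler inequality, for functions normalised to have supremum `1`
(in which case the arithmetic mean appears on the right). -/
lemma prekopa_leindler_normalized {f g h : ℝ → ℝ} (hf : Measurable f) (hg : Measurable g)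
    (hh : Measurable h) (f0 : ∀ x, 0 ≤ f x) (g0 : ∀ x, 0 ≤ g x) (h0 : ∀ x, 0 ≤ h x)
    (f1 : ∀ x, f x ≤ 1) (g1 : ∀ x, g x ≤ 1) (fs : ∀ t < 1, ∃ x, t < f x)
    (gs : ∀ t < 1, ∃ x, t < g x) (hfg : ∀ x y, f x * g y ≤ h ((x + y) / 2) ^ 2) :
    (∫⁻ x, ENNReal.ofReal (f x)) + ∫⁻ x, ENNReal.ofReal (g x) ≤
      2 * ∫⁻ x, ENNReal.ofReal (h x) := by
  rw [lintegral_eq_lintegral_meas_lt _ (ae_of_all _ f0) hf.aemeasurable,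
    lintegral_eq_lintegral_meas_lt _ (ae_of_all _ g0) hg.aemeasurable,
    lintegral_eq_lintegral_meas_lt _ (ae_of_all _ h0) hh.aemeasurable,
    ← lintegral_const_mul' _ _ (by norm_num), ← lintegral_add_left']
  · refine setLIntegral_mono_ae' measurableSet_Ioi (ae_of_all _ fun t ht => ?_)
    have ht : 0 < t := ht
    rcases lt_or_ge t 1 with h1 | h1
    · refine volume_add_le_of_midpoint (measurableSet_lt measurable_const hf)
        (measurableSet_lt measurable_const hg) (fs t h1) (gs t h1) ?_
      intro a ha b hb
      simp only [Set.mem_ofPred_eq] at *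
      have := hfg a b
      have h3 : t ^ 2 < h ((a + b) / 2) ^ 2 := by
        nlinarith
      exact lt_of_pow_lt_pow_left₀ 2 (h0 _) h3
    · have e1 : {a | t < f a} = ∅ := by
        ext a; simpa using (f1 a).trans h1
      have e2 : {a | t < g a} = ∅ := by
        ext a; simpa using (g1 a).trans h1
      simp [e1, e2]
  · refine (Antitone.measurable ?_).aemeasurable
    intro s t hst
    exact measure_mono fun x (hx : t < f x) => lt_of_le_of_lt hst hx

/-- Maurey's property `(τ)` for the standard Gaussian measure on the line. -/
lemma maurey_one_dim {F G : ℝ → ℝ≥0∞} (hF : Measurable F) (hG : Measurable G)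
    (hFG : ∀ x y, F x * G y ≤ ENNReal.ofReal (Real.exp ((x - y) ^ 2 / 4))) :
    (∫⁻ x, F x ∂gaussianReal 0 1) * (∫⁻ x, G x ∂gaussianReal 0 1) ≤ 1 := by
  set φ : ℝ → ℝ≥0∞ := gaussianPDF 0 1 with hφ
  have hφm : Measurable φ := measurable_gaussianPDF 0 1
  have hdens : ∀ {H : ℝ → ℝ≥0∞}, Measurable H →
      ∫⁻ x, H x ∂gaussianReal 0 1 = ∫⁻ x, φ x * H x := by
    intro H hH
    rw [gaussianReal_of_var_ne_zero _ one_ne_zero, lintegral_withDensity_eq_lintegral_mul _ hφm hH]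
    rfl
  rw [hdens hF, hdens hG]
  set f : ℝ → ℝ≥0∞ := fun x => φ x * F x with hf
  set g : ℝ → ℝ≥0∞ := fun x => φ x * G x with hg
  have hfm : Measurable f := hφm.mul hF
  have hgm : Measurable g := hφm.mul hG
  have hfg : ∀ x y, f x * g y ≤ φ ((x + y) / 2) ^ 2 := by
    intro x y
    calc f x * g y = (φ x * φ y) * (F x * G y) := by simp only [hf, hg]; ring
      _ ≤ (φ x * φ y) * ENNReal.ofReal (Real.exp ((x - y) ^ 2 / 4)) := by gcongr; exact hFG x y
      _ = φ ((x + y) / 2) ^ 2 := by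
        simp only [hφ, gaussianPDF]
        rw [← ENNReal.ofReal_mul (gaussianPDFReal_nonneg _ _ _),
          ← ENNReal.ofReal_mul (mul_nonneg (gaussianPDFReal_nonneg _ _ _)
            (gaussianPDFReal_nonneg _ _ _)), ← ENNReal.ofReal_pow (gaussianPDFReal_nonneg _ _ _)]
        congr 1
        simp only [gaussianPDFReal, NNReal.coe_one, sub_zero, mul_one]
        rw [mul_pow, ← Real.exp_nat_mul]
        rw [show ∀ c a b e : ℝ, c * Real.exp a * (c * Real.exp b) * Real.exp e
          = c ^ 2 * Real.exp (a + b + e) by intros; rw [Real.exp_add, Real.exp_add]; ring]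
        congr 2
        push_cast
        ring
  have hφ1 : ∀ x, φ x ≤ 1 := by
    intro x
    simp only [hφ, gaussianPDF, gaussianPDFReal, ENNReal.ofReal_le_one]
    have h1 : (√(2 * Real.pi * ((1 : NNReal) : ℝ)))⁻¹ ≤ 1 := by
      apply inv_le_one_of_one_le₀
      rw [Real.one_le_sqrt]
      have := Real.pi_gt_three
      push_cast; linarith
    have h2 : Real.exp (-(x - 0) ^ 2 / (2 * ((1 : NNReal) : ℝ))) ≤ 1 := by
      rw [Real.exp_le_one_iff]
      push_cast
      nlinarith [sq_nonneg x]
    exact mul_le_one₀ h1 (Real.exp_nonneg _) h2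
  set a : ℝ≥0∞ := ⨆ x, f x with ha
  set b : ℝ≥0∞ := ⨆ x, g x with hb
  by_cases ha0 : a = 0
  · have : ∀ x, f x = 0 := fun x => le_antisymm (ha0 ▸ le_iSup f x) bot_le
    rw [show ∫⁻ x, f x = 0 by simp [this]]
    simp
  by_cases hb0 : b = 0
  · have : ∀ x, g x = 0 := fun x => le_antisymm (hb0 ▸ le_iSup g x) bot_le
    rw [show ∫⁻ x, g x = 0 by simp [this]]
    simp
  have hab : a * b ≤ 1 := by
    rw [ha, ENNReal.iSup_mul]
    refine iSup_le fun x => ?_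
    rw [hb, ENNReal.mul_iSup]
    refine iSup_le fun y => (hfg x y).trans ?_
    exact pow_le_one₀ bot_le (hφ1 _)
  have hatop : a ≠ ⊤ := by
    rintro h
    rw [h, ENNReal.top_mul hb0] at hab
    simp at hab
  have hbtop : b ≠ ⊤ := by
    rintro h
    rw [h, ENNReal.mul_top ha0] at hab
    simp at hab
  have har : 0 < a.toReal := ENNReal.toReal_pos ha0 hatop
  have hbr : 0 < b.toReal := ENNReal.toReal_pos hb0 hbtop
  have hfa : ∀ x, f x ≤ a := fun x => le_iSup f x
  have hgb : ∀ x, g x ≤ b := fun x => le_iSup g x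
  have hft : ∀ x, f x ≠ ⊤ := fun x => ne_top_of_le_ne_top hatop (hfa x)
  have hgt : ∀ x, g x ≠ ⊤ := fun x => ne_top_of_le_ne_top hbtop (hgb x)
  set s : ℝ := √(a.toReal * b.toReal) with hs
  have hs0 : 0 < s := Real.sqrt_pos.2 (mul_pos har hbr)
  have hs2 : s ^ 2 = a.toReal * b.toReal := Real.sq_sqrt (mul_pos har hbr).le
  have key := prekopa_leindler_normalized (f := fun x => (f x).toReal / a.toReal)
    (g := fun x => (g x).toReal / b.toReal) (h := fun x => (φ x).toReal / s)
    (hfm.ennreal_toReal.div_const _) (hgm.ennreal_toReal.div_const _)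
    (hφm.ennreal_toReal.div_const _) (fun x => by positivity) (fun x => by positivity)
    (fun x => by positivity)
    (fun x => (div_le_one har).2 (ENNReal.toReal_mono hatop (hfa x)))
    (fun x => (div_le_one hbr).2 (ENNReal.toReal_mono hbtop (hgb x)))
    (fun t ht => by
      rcases lt_or_ge t 0 with h | h
      · exact ⟨0, h.trans_le (by positivity)⟩
      · have : ENNReal.ofReal (t * a.toReal) < a := by
          rw [ENNReal.ofReal_lt_iff_lt_toReal (by positivity) hatop]
          nlinarith
        obtain ⟨x, hx⟩ := lt_iSup_iff.1 this
        refine ⟨x, ?_⟩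
        rw [ENNReal.ofReal_lt_iff_lt_toReal (by positivity) (hft x)] at hx
        rwa [lt_div_iff₀ har])
    (fun t ht => by
      rcases lt_or_ge t 0 with h | h
      · exact ⟨0, h.trans_le (by positivity)⟩
      · have : ENNReal.ofReal (t * b.toReal) < b := by
          rw [ENNReal.ofReal_lt_iff_lt_toReal (by positivity) hbtop]
          nlinarith
        obtain ⟨x, hx⟩ := lt_iSup_iff.1 this
        refine ⟨x, ?_⟩
        rw [ENNReal.ofReal_lt_iff_lt_toReal (by positivity) (hgt x)] at hx
        rwa [lt_div_iff₀ hbr])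
    (fun x y => by
      have := ENNReal.toReal_mono (ENNReal.pow_ne_top
        (ne_top_of_le_ne_top ENNReal.one_ne_top (hφ1 _))) (hfg x y)
      rw [ENNReal.toReal_mul, ENNReal.toReal_pow] at this
      rw [div_mul_div_comm, div_pow, hs2]
      gcongr)
  have conv : ∀ {H : ℝ → ℝ≥0∞} {c : ℝ}, 0 < c → (∀ x, H x ≠ ⊤) →
      ∫⁻ x, ENNReal.ofReal ((H x).toReal / c) = (∫⁻ x, H x) / ENNReal.ofReal c := by
    intro H c hc hH
    rw [ENNReal.div_eq_inv_mul, ← lintegral_const_mul' _ _ (by simp [hc])]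
    refine lintegral_congr fun x => ?_
    rw [ENNReal.ofReal_div_of_pos hc, ENNReal.ofReal_toReal (hH x), ENNReal.div_eq_inv_mul]
  have hφt : ∀ x, φ x ≠ ⊤ := fun x => ne_top_of_le_ne_top ENNReal.one_ne_top (hφ1 x)
  rw [conv har hft, conv hbr hgt, conv hs0 hφt, ENNReal.ofReal_toReal hatop,
    ENNReal.ofReal_toReal hbtop, hφ, lintegral_gaussianPDF_eq_one _ one_ne_zero] at key
  have hRt : 2 * (1 / ENNReal.ofReal s) ≠ ⊤ := by
    simp [ENNReal.mul_eq_top, hs0]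
  have hft' : ∫⁻ x, f x ≠ ⊤ := by
    intro h
    rw [h, ENNReal.top_div_of_ne_top hatop, top_add] at key
    exact hRt (top_le_iff.1 key)
  have hgt' : ∫⁻ x, g x ≠ ⊤ := by
    intro h
    rw [h, ENNReal.top_div_of_ne_top hbtop, add_top] at key
    exact hRt (top_le_iff.1 key)
  have keyR := ENNReal.toReal_mono hRt key
  rw [ENNReal.toReal_add (ENNReal.div_ne_top hft' ha0) (ENNReal.div_ne_top hgt' hb0),
    ENNReal.toReal_div, ENNReal.toReal_div, ENNReal.toReal_mul, ENNReal.toReal_div,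
    ENNReal.toReal_ofReal hs0.le] at keyR
  simp only [ENNReal.toReal_ofNat, ENNReal.toReal_one] at keyR
  rw [← ENNReal.toReal_le_toReal (ENNReal.mul_ne_top hft' hgt') ENNReal.one_ne_top,
    ENNReal.toReal_mul, ENNReal.toReal_one]
  -- arithmetic-geometric mean inequality undoes the normalisation
  set u := (∫⁻ x, f x).toReal
  set w := (∫⁻ x, g x).toReal
  have hu : 0 ≤ u := ENNReal.toReal_nonneg
  have hw : 0 ≤ w := ENNReal.toReal_nonneg
  have h1 : (u / a.toReal + w / b.toReal) ^ 2 ≤ (2 * (1 / s)) ^ 2 := by gcongr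
  have h2 : 4 * (u / a.toReal * (w / b.toReal)) ≤ (2 * (1 / s)) ^ 2 := by
    nlinarith [sq_nonneg (u / a.toReal - w / b.toReal)]
  have h3 : u / a.toReal * (w / b.toReal) = u * w / s ^ 2 := by
    rw [hs2]; field_simp
  rw [h3, mul_pow, div_pow, one_pow] at h2
  have h4 : u * w / s ^ 2 ≤ 1 / s ^ 2 := by linarith
  rwa [div_le_div_iff_of_pos_right (by positivity)] at h4

instance isProbabilityMeasure_stdGaussian (ι : Type*) [Fintype ι] :
    IsProbabilityMeasure (_root_.stdGaussian ι) := by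
  unfold _root_.stdGaussian; infer_instance

/-- Maurey's property `(τ)` for the standard Gaussian measure on `ℝⁿ`, by tensorisation. -/
lemma maurey_property (n : ℕ) : ∀ {F G : (Fin n → ℝ) → ℝ≥0∞}, Measurable F → Measurable G →
    (∀ x y, F x * G y ≤ ENNReal.ofReal (Real.exp (∑ i, (x i - y i) ^ 2 / 4))) →
    (∫⁻ x, F x ∂_root_.stdGaussian (Fin n)) * (∫⁻ x, G x ∂_root_.stdGaussian (Fin n)) ≤ 1 := by
  induction n with
  | zero =>
    intro F G hF hG h
    have e : ∀ H : (Fin 0 → ℝ) → ℝ≥0∞, ∫⁻ x, H x ∂_root_.stdGaussian (Fin 0) = H default := by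
      intro H
      have : H = fun _ => H default := by
        funext x; rw [Subsingleton.elim x default]
      rw [this]
      simp
    rw [e, e]
    simpa using h default default
  | succ n ih =>
    intro F G hF hG h
    have hcons : ∀ z : ℝ × (Fin n → ℝ),
        (MeasurableEquiv.piFinSuccAbove (fun _ : Fin (n + 1) => ℝ) 0).symm z =
          Fin.cons z.1 z.2 := fun z => by
      simp [MeasurableEquiv.piFinSuccAbove_symm_apply, Fin.insertNthEquiv]
    have hm : ∀ {H : (Fin (n + 1) → ℝ) → ℝ≥0∞}, Measurable H →
        Measurable fun z : ℝ × (Fin n → ℝ) => H (Fin.cons z.1 z.2) := by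
      intro H hH
      simp only [← hcons]
      exact hH.comp (MeasurableEquiv.measurable _)
    have e : ∀ {H : (Fin (n + 1) → ℝ) → ℝ≥0∞}, Measurable H →
        ∫⁻ x, H x ∂_root_.stdGaussian (Fin (n + 1)) =
          ∫⁻ s, ∫⁻ x, H (Fin.cons s x) ∂_root_.stdGaussian (Fin n) ∂gaussianReal 0 1 := by
      intro H hH
      have mp := (measurePreserving_piFinSuccAbove (fun _ : Fin (n + 1) => gaussianReal 0 1) 0).symm
      have := mp.lintegral_comp hH
      simp only [hcons] at this
      rw [_root_.stdGaussian, ← this, lintegral_prod _ (hm hH).aemeasurable]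
      rfl
    rw [e hF, e hG]
    refine maurey_one_dim (hm hF).lintegral_prod_right' (hm hG).lintegral_prod_right' ?_
    intro s t
    have := ih (F := fun x => F (Fin.cons s x))
      (G := fun x => ENNReal.ofReal (Real.exp (-((s - t) ^ 2 / 4))) * G (Fin.cons t x))
      ((hm hF).comp (by fun_prop : Measurable fun x : Fin n → ℝ => (s, x)))
      (((hm hG).comp (by fun_prop : Measurable fun x : Fin n → ℝ => (t, x))).const_mul _) ?_
    · rw [lintegral_const_mul' _ _ (by simp)] at this
      rw [mul_left_comm, Real.exp_neg, ENNReal.ofReal_inv_of_pos (Real.exp_pos _), mul_comm,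
        ← div_eq_mul_inv, ENNReal.div_le_iff (by simp [Real.exp_pos]) (by simp), one_mul] at this
      exact this
    · intro x y
      have h1 := h (Fin.cons s x) (Fin.cons t y)
      simp only [Fin.sum_univ_succ, Fin.cons_zero, Fin.cons_succ] at h1
      rw [mul_left_comm]
      refine (mul_le_mul_right h1 _).trans ?_
      rw [← ENNReal.ofReal_mul (Real.exp_nonneg _), ← Real.exp_add]
      apply le_of_eq
      congr 2
      ring

/-- Exponentials of linear functions are integrable on a Gaussian space; used as an envelope. -/
lemma integrable_exp_sum_abs (ι : Type*) [Fintype ι] (c : ℝ) :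
    Integrable (fun ω : ι → ℝ => Real.exp (c * ∑ i, |ω i|)) (_root_.stdGaussian ι) := by
  have h : ∀ c : ℝ, Integrable (fun s : ℝ => Real.exp (c * |s|)) (gaussianReal 0 1) := by
    intro c
    have h1 : Integrable (fun s : ℝ => Real.exp (c * s) + Real.exp (-c * s)) (gaussianReal 0 1) :=
      (integrable_exp_mul_gaussianReal c).add (integrable_exp_mul_gaussianReal (-c))
    refine h1.mono' (by fun_prop) (ae_of_all _ fun s => ?_)
    rw [Real.norm_eq_abs, Real.abs_exp]
    rcases abs_cases s with ⟨h, -⟩ | ⟨h, -⟩ <;> rw [h]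
    · linarith [Real.exp_pos (-c * s)]
    · rw [mul_neg, ← neg_mul]; linarith [Real.exp_pos (c * s)]
  have := Integrable.fintype_prod (μ := fun _ : ι => gaussianReal 0 1)
    (f := fun _ s => Real.exp (c * |s|)) (fun _ => h c)
  simpa [Finset.mul_sum, Real.exp_sum, _root_.stdGaussian] using this

lemma sum_abs_le_exp {ι : Type*} [Fintype ι] (ω : ι → ℝ) (i : ι) :
    |ω i| ≤ Real.exp (1 * ∑ i, |ω i|) := by
  have h1 : |ω i| ≤ ∑ i, |ω i| :=
    Finset.single_le_sum (f := fun i => |ω i|) (fun _ _ => abs_nonneg _) (Finset.mem_univ i)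
  have h2 := Real.add_one_le_exp (1 * ∑ i, |ω i|)
  linarith

lemma integrable_coord {ι : Type*} [Fintype ι] (i : ι) :
    Integrable (fun ω : ι → ℝ => ω i) (_root_.stdGaussian ι) :=
  (integrable_exp_sum_abs ι 1).mono' (measurable_pi_apply i).aestronglyMeasurable (ae_of_all _ fun ω => sum_abs_le_exp ω i)

lemma integral_coord {ι : Type*} [Fintype ι] (i : ι) :
    ∫ ω : ι → ℝ, ω i ∂_root_.stdGaussian ι = 0 := by
  have h2 := integral_map (μ := _root_.stdGaussian ι) (φ := fun ω : ι → ℝ => ω i)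
    (f := fun s => s)
    (measurable_pi_apply i).aemeasurable aestronglyMeasurable_id
  have h3 : (_root_.stdGaussian ι).map (fun ω : ι → ℝ => ω i) = gaussianReal 0 1 :=
    (measurePreserving_eval (fun _ : ι => gaussianReal 0 1) i).map_eq
  rw [h3] at h2
  rw [← h2]
  exact integral_id_gaussianReal

/-! ### Exponential bounds for Gaussian suprema -/

section Sup

variable {n : ℕ} {τ : Type*} {v : τ → Fin n → ℝ} {c : ℝ}

lemma abs_sum_mul_le (hv : ∀ t i, |v t i| ≤ c) (g : Fin n → ℝ) (t : τ) :
    |∑ i, g i * v t i| ≤ c * ∑ i, |g i| := by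
  rw [Finset.mul_sum]
  refine (Finset.abs_sum_le_sum_abs _ _).trans (Finset.sum_le_sum fun i _ => ?_)
  rw [abs_mul, mul_comm]
  exact mul_le_mul_of_nonneg_right (hv t i) (abs_nonneg _)

lemma bddAbove_linear (hv : ∀ t i, |v t i| ≤ c) (g : Fin n → ℝ) :
    BddAbove (Set.range fun t => ∑ i, g i * v t i) :=
  ⟨c * ∑ i, |g i|, by rintro _ ⟨t, rfl⟩; exact (le_abs_self _).trans (abs_sum_mul_le hv g t)⟩

lemma abs_iSup_linear_le [Nonempty τ] (hv : ∀ t i, |v t i| ≤ c) (g : Fin n → ℝ) :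
    |⨆ t, ∑ i, g i * v t i| ≤ c * ∑ i, |g i| := by
  obtain ⟨t⟩ := ‹Nonempty τ›
  refine abs_le.2 ⟨?_, ciSup_le fun t => (le_abs_self _).trans (abs_sum_mul_le hv g t)⟩
  exact (neg_le_of_abs_le (abs_sum_mul_le hv g t)).trans (le_ciSup (bddAbove_linear hv g) t)

lemma measurable_iSup_linear (hv : ∀ t i, |v t i| ≤ c) :
    Measurable fun g : Fin n → ℝ => ⨆ t, ∑ i, g i * v t i := by
  refine LowerSemicontinuous.measurable (lowerSemicontinuous_ciSup (bddAbove_linear hv) ?_)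
  intro t
  exact Continuous.lowerSemicontinuous (by fun_prop)

lemma integrable_iSup_linear [Nonempty τ] (hv : ∀ t i, |v t i| ≤ c) :
    Integrable (fun g : Fin n → ℝ => ⨆ t, ∑ i, g i * v t i) (_root_.stdGaussian (Fin n)) := by
  have h : Integrable (fun g : Fin n → ℝ => c * ∑ i, |g i|) (_root_.stdGaussian (Fin n)) :=
    (integrable_finsetSum _ fun i _ => (integrable_coord i).abs).const_mul c
  exact h.mono' (measurable_iSup_linear hv).aestronglyMeasurable
    (ae_of_all _ fun g => abs_iSup_linear_le hv g)

/-- A form of Vitale's inequality for the Wills functional: the penalised exponential supremum of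
a Gaussian process is controlled by the plain expected supremum. The translation by `w` does not
change the right-hand side. It is Maurey's property applied to `e^{-h}` with `h` the support
function. -/
lemma wills_bound [Nonempty τ] (hv : ∀ t i, |v t i| ≤ c) (w : Fin n → ℝ) {lam : ℝ} (hl : 0 < lam) :
    ∫⁻ g, ⨆ t, ENNReal.ofReal (Real.exp (lam * ∑ i, g i * (v t i - w i) -
        lam ^ 2 * ∑ i, (v t i - w i) ^ 2)) ∂_root_.stdGaussian (Fin n) ≤
      ENNReal.ofReal (Real.exp (lam * ∫ g, ⨆ t, ∑ i, g i * v t i ∂_root_.stdGaussian (Fin n))) := by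
  set μ := _root_.stdGaussian (Fin n)
  set b : (Fin n → ℝ) → ℝ := fun y => lam * ((⨆ t, ∑ i, y i * v t i) - ∑ i, y i * w i) with hb
  have hbm : Measurable b := by
    have := measurable_iSup_linear hv
    exact (this.sub (by fun_prop)).const_mul _
  have hwi : Integrable (fun y : Fin n → ℝ => ∑ i, y i * w i) μ :=
    integrable_finsetSum _ fun i _ => (integrable_coord i).mul_const _
  have hbi : Integrable b μ := ((integrable_iSup_linear hv).sub hwi).const_mul _
  have hbint : ∫ y, b y ∂μ = lam * ∫ g, ⨆ t, ∑ i, g i * v t i ∂μ := by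
    rw [integral_const_mul, integral_sub (integrable_iSup_linear hv) hwi,
      integral_finsetSum _ fun i _ => (integrable_coord i).mul_const _]
    simp [μ, integral_mul_const, integral_coord]
  rw [← hbint]
  set m := ∫ y, b y ∂μ
  -- Jensen's inequality for `e^{-b}`
  have hJ : ENNReal.ofReal (Real.exp (-m)) ≤ ∫⁻ y, ENNReal.ofReal (Real.exp (-b y)) ∂μ := by
    by_cases hI : Integrable (fun y => Real.exp (-b y)) μ
    · rw [← ofReal_integral_eq_lintegral_ofReal hI (ae_of_all _ fun _ => Real.exp_nonneg _)]
      refine ENNReal.ofReal_le_ofReal ?_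
      have h1 : ∫ y, Real.exp (-m) * (1 + (m - b y)) ∂μ ≤ ∫ y, Real.exp (-b y) ∂μ := by
        refine integral_mono (((integrable_const _).add
          ((integrable_const _).sub hbi)).const_mul _) hI fun y => ?_
        have := Real.add_one_le_exp (m - b y)
        calc Real.exp (-m) * (1 + (m - b y)) ≤ Real.exp (-m) * Real.exp (m - b y) := by
              gcongr; linarith
          _ = Real.exp (-b y) := by rw [← Real.exp_add]; congr 1; ring
      have h2 : ∫ y, (1 + (m - b y)) ∂μ = 1 := by
        have h3 : Integrable (fun y => m - b y) μ := (integrable_const _).sub hbi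
        rw [integral_add (integrable_const _) h3, integral_sub (integrable_const _) hbi]
        simp [m]
      rwa [integral_const_mul, h2, mul_one] at h1
    · have : ∫⁻ y, ENNReal.ofReal (Real.exp (-b y)) ∂μ = ⊤ := by
        by_contra hne
        exact hI ((lintegral_ofReal_ne_top_iff_integrable (by fun_prop)
          (ae_of_all _ fun _ => Real.exp_nonneg _)).1 hne)
      simp [this]
  have hF : Measurable fun g : Fin n → ℝ => ⨆ t, ENNReal.ofReal (Real.exp
      (lam * ∑ i, g i * (v t i - w i) - lam ^ 2 * ∑ i, (v t i - w i) ^ 2)) := by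
    refine LowerSemicontinuous.measurable (lowerSemicontinuous_iSup fun t => ?_)
    exact Continuous.lowerSemicontinuous (ENNReal.continuous_ofReal.comp (by fun_prop))
  have key := maurey_property n hF (G := fun y => ENNReal.ofReal (Real.exp (-b y)))
    (by fun_prop) ?_
  · have h2 := (mul_le_mul_right hJ _).trans key
    rwa [Real.exp_neg, ENNReal.ofReal_inv_of_pos (Real.exp_pos _), ← div_eq_mul_inv,
      ENNReal.div_le_iff (by simp [Real.exp_pos]) (by simp), one_mul] at h2
  · intro x y
    rw [ENNReal.iSup_mul]
    refine iSup_le fun t => ?_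
    rw [← ENNReal.ofReal_mul (Real.exp_nonneg _), ← Real.exp_add]
    refine ENNReal.ofReal_le_ofReal (Real.exp_le_exp.2 ?_)
    have h1 : ∑ i, y i * v t i ≤ ⨆ t, ∑ i, y i * v t i := le_ciSup (bddAbove_linear hv y) t
    have h2 : lam * (∑ i, y i * v t i - ∑ i, y i * w i) ≤ b y := by
      simp only [hb]; gcongr
    have h3 : lam * ∑ i, x i * (v t i - w i) - lam ^ 2 * ∑ i, (v t i - w i) ^ 2
        - lam * (∑ i, y i * v t i - ∑ i, y i * w i) ≤ ∑ i, (x i - y i) ^ 2 / 4 := by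
      rw [← Finset.sum_sub_distrib, Finset.mul_sum, Finset.mul_sum, Finset.mul_sum,
        ← Finset.sum_sub_distrib, ← Finset.sum_sub_distrib]
      refine Finset.sum_le_sum fun i _ => ?_
      nlinarith [sq_nonneg ((x i - y i) / 2 - lam * (v t i - w i))]
    linarith

end Sup

/-! ### The Gaussian shift formula -/

lemma gaussianReal_withDensity_shift (u : ℝ) :
    (gaussianReal 0 1).withDensity (fun s => ENNReal.ofReal (Real.exp (-(u * s) - u ^ 2 / 2))) =
      gaussianReal (-u) 1 := by
  rw [gaussianReal_of_var_ne_zero _ one_ne_zero, gaussianReal_of_var_ne_zero _ one_ne_zero,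
    ← withDensity_mul _ (measurable_gaussianPDF 0 1) (by fun_prop)]
  congr 1
  ext s
  simp only [Pi.mul_apply, gaussianPDF, gaussianPDFReal]
  rw [← ENNReal.ofReal_mul (by positivity), mul_assoc, ← Real.exp_add]
  congr 3
  push_cast
  ring

lemma setLIntegral_gaussianReal_shift (u : ℝ) {S : Set ℝ} (hS : MeasurableSet S) :
    ∫⁻ s in (fun s => s + u) ⁻¹' S, ENNReal.ofReal (Real.exp (-(u * s) - u ^ 2 / 2))
      ∂gaussianReal 0 1 = gaussianReal 0 1 S := by
  rw [← withDensity_apply _ (measurableSet_preimage (by fun_prop) hS),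
    gaussianReal_withDensity_shift, ← Measure.map_apply (by fun_prop) hS,
    gaussianReal_map_add_const]
  simp

lemma lintegral_stdGaussian_prod {ι : Type*} [Fintype ι] (f : ι → ℝ → ℝ≥0∞)
    (hf : ∀ i, Measurable (f i)) :
    ∫⁻ ω, ∏ i, f i (ω i) ∂_root_.stdGaussian ι = ∏ i, ∫⁻ s, f i s ∂gaussianReal 0 1 := by
  have hi : iIndepFun (fun i (ω : ι → ℝ) => f i (ω i)) (_root_.stdGaussian ι) :=
    iIndepFun_pi (μ := fun _ : ι => gaussianReal 0 1) (X := f) (fun i => (hf i).aemeasurable)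
  have h := lintegral_prod_eq_prod_lintegral_of_indepFun Finset.univ _ hi
    (fun i => (hf i).comp (measurable_pi_apply i))
  rw [h]
  refine Finset.prod_congr rfl fun i _ => ?_
  exact (measurePreserving_eval (fun _ : ι => gaussianReal 0 1) i).lintegral_comp (hf i)

/-- Cameron–Martin formula for a shift of the standard Gaussian measure. -/
lemma lintegral_stdGaussian_shift {ι : Type*} [Fintype ι] (u : ι → ℝ) {H : (ι → ℝ) → ℝ≥0∞}
    (hH : Measurable H) :
    ∫⁻ h, H h ∂_root_.stdGaussian ι = ∫⁻ h, ENNReal.ofReal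
      (Real.exp (-(∑ i, u i * h i) - (∑ i, u i ^ 2) / 2)) * H (h + u) ∂_root_.stdGaussian ι := by
  set w : (ι → ℝ) → ℝ≥0∞ := fun h =>
    ∏ i, ENNReal.ofReal (Real.exp (-(u i * h i) - u i ^ 2 / 2)) with hw
  have hwm : Measurable w := by
    refine Finset.measurable_prod _ fun i _ => ?_
    fun_prop
  have hwe : ∀ h, w h = ENNReal.ofReal
      (Real.exp (-(∑ i, u i * h i) - (∑ i, u i ^ 2) / 2)) := by
    intro h
    rw [hw]
    simp only
    rw [← ENNReal.ofReal_prod_of_nonneg (fun _ _ => (Real.exp_pos _).le), ← Real.exp_sum,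
      Finset.sum_sub_distrib, Finset.sum_neg_distrib, Finset.sum_div]
  have key : ((_root_.stdGaussian ι).withDensity w).map (fun h => h + u) =
      _root_.stdGaussian ι := by
    symm
    refine Measure.pi_eq fun S hS => ?_
    have hadd : Measurable fun h : ι → ℝ => h + u := by fun_prop
    rw [Measure.map_apply hadd (MeasurableSet.univ_pi hS),
      withDensity_apply _ (measurableSet_preimage hadd (MeasurableSet.univ_pi hS)),
      ← lintegral_indicator (measurableSet_preimage hadd (MeasurableSet.univ_pi hS))]
    have : ∀ h : ι → ℝ, ((fun h : ι → ℝ => h + u) ⁻¹' Set.univ.pi S).indicator w h =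
        ∏ i, ((fun s => s + u i) ⁻¹' S i).indicator
          (fun s => ENNReal.ofReal (Real.exp (-(u i * s) - u i ^ 2 / 2))) (h i) := by
      intro h
      by_cases hh : h ∈ (fun h : ι → ℝ => h + u) ⁻¹' Set.univ.pi S
      · rw [Set.indicator_of_mem hh]
        refine Finset.prod_congr rfl fun i _ => ?_
        rw [Set.indicator_of_mem]
        exact hh i trivial
      · rw [Set.indicator_of_notMem hh]
        simp only [Set.mem_preimage, Set.mem_univ_pi, not_forall] at hh
        obtain ⟨i, hi⟩ := hh
        symm
        refine Finset.prod_eq_zero (Finset.mem_univ i) (Set.indicator_of_notMem ?_ _)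
        exact hi
    simp only [this]
    rw [lintegral_stdGaussian_prod]
    · refine Finset.prod_congr rfl fun i _ => ?_
      rw [lintegral_indicator (measurableSet_preimage (by fun_prop) (hS i)),
        setLIntegral_gaussianReal_shift _ (hS i)]
    · intro i
      exact Measurable.indicator (by fun_prop) (measurableSet_preimage (by fun_prop) (hS i))
  conv_lhs => rw [← key]
  rw [lintegral_map hH (by fun_prop), lintegral_withDensity_eq_lintegral_mul _ hwm
    (g := fun h => H (h + u)) (hH.comp (by fun_prop))]
  refine lintegral_congr fun h => ?_
  simp only [Pi.mul_apply, hwe]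

/-! ### The variational inequality -/

lemma integral_le_toReal_lintegral {α : Type*} [MeasurableSpace α] {μ : Measure α} {f : α → ℝ}
    (hf : Integrable f μ) {Z : ℝ≥0∞} (hZ : Z ≠ ∞) (h : ∫⁻ a, ENNReal.ofReal (f a) ∂μ ≤ Z) :
    ∫ a, f a ∂μ ≤ Z.toReal := by
  rw [integral_eq_lintegral_pos_part_sub_lintegral_neg_part hf]
  have := ENNReal.toReal_mono hZ h
  have h2 : 0 ≤ (∫⁻ a, ENNReal.ofReal (-f a) ∂μ).toReal := ENNReal.toReal_nonneg
  linarith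

section Variational

variable {κ τ : Type*} [Fintype κ] {n : ℕ}

/-- The Gaussian mean of the supremum of the process `t ↦ ⟨g, V y t⟩`. -/
noncomputable def supMean (V : (κ → ℝ) → τ → Fin n → ℝ) (y : κ → ℝ) : ℝ :=
  ∫ g, ⨆ t, ∑ i, g i * V y t i ∂_root_.stdGaussian (Fin n)

lemma measurable_iSup_joint {V : (κ → ℝ) → τ → Fin n → ℝ} {c : (κ → ℝ) → ℝ}
    (hV : ∀ t i, Continuous fun y => V y t i) (hc : ∀ y t i, |V y t i| ≤ c y) :
    Measurable fun q : (κ → ℝ) × (Fin n → ℝ) => ⨆ t, ∑ i, q.2 i * V q.1 t i := by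
  refine LowerSemicontinuous.measurable (lowerSemicontinuous_ciSup ?_ ?_)
  · intro q
    exact bddAbove_linear (hc q.1) q.2
  · intro t
    refine Continuous.lowerSemicontinuous ?_
    refine continuous_finsetSum _ fun i _ => ?_
    exact (by fun_prop : Continuous fun q : (κ → ℝ) × (Fin n → ℝ) => q.2 i).mul
      ((hV t i).comp continuous_fst)

lemma measurable_supMean {V : (κ → ℝ) → τ → Fin n → ℝ} {c : (κ → ℝ) → ℝ}
    (hV : ∀ t i, Continuous fun y => V y t i) (hc : ∀ y t i, |V y t i| ≤ c y) :
    Measurable (supMean V) :=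
  ((measurable_iSup_joint hV hc).stronglyMeasurable.integral_prod_right'
    (ν := _root_.stdGaussian (Fin n))).measurable

set_option maxHeartbeats 1000000 in
/-- Random-shift (PAC–Bayes) form of the Maurey-type exponential bound.  The exponential weights of
all the processes `V y` are averaged into the single random variable `Z` over a Gaussian prior on
`y`; comparing that prior with its shift by `x` controls, for every `x` simultaneously, the process
at `x` by the smoothed quantities around `x`. -/
lemma exists_variational_bound [Nonempty τ] {V : (κ → ℝ) → τ → Fin n → ℝ} {c : (κ → ℝ) → ℝ}
    (hV : ∀ t i, Continuous fun y => V y t i) (hc : ∀ y t i, |V y t i| ≤ c y)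
    (w : Fin n → ℝ) {lam σ : ℝ} (hl : 0 < lam) (hσ : 0 < σ) :
    ∃ Z : (Fin n → ℝ) → ℝ≥0∞, Measurable Z ∧ ∫⁻ g, Z g ∂_root_.stdGaussian (Fin n) ≤ 1 ∧
      ∀ g, Z g ≠ ∞ → ∀ (x : κ → ℝ) (t : τ) (R S : ℝ),
        (∀ i, Integrable (fun h => V (x + σ • h) t i) (_root_.stdGaussian κ)) →
        (∀ i, ∫ h, V (x + σ • h) t i ∂_root_.stdGaussian κ = V x t i) →
        Integrable (fun h => ∑ i, (V (x + σ • h) t i - w i) ^ 2) (_root_.stdGaussian κ) →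
        ∫ h, ∑ i, (V (x + σ • h) t i - w i) ^ 2 ∂_root_.stdGaussian κ ≤ R →
        Integrable (fun h => supMean V (x + σ • h)) (_root_.stdGaussian κ) →
        ∫ h, supMean V (x + σ • h) ∂_root_.stdGaussian κ ≤ S →
        lam * ∑ i, g i * (V x t i - w i) - lam ^ 2 * R - lam * S ≤
          (Z g).toReal - 1 + (∑ k, x k ^ 2) / (2 * σ ^ 2) := by
  set η := _root_.stdGaussian κ
  set e : (Fin n → ℝ) → (κ → ℝ) → τ → ℝ := fun g y t =>
    lam * ∑ i, g i * (V y t i - w i) - lam ^ 2 * ∑ i, (V y t i - w i) ^ 2 with he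
  set H : (Fin n → ℝ) × (κ → ℝ) → ℝ≥0∞ := fun q =>
    (⨆ t, ENNReal.ofReal (Real.exp (e q.1 q.2 t))) *
      ENNReal.ofReal (Real.exp (-(lam * supMean V q.2))) with hH
  have hHm : Measurable H := by
    refine Measurable.mul ?_ ?_
    · refine LowerSemicontinuous.measurable (lowerSemicontinuous_iSup fun t => ?_)
      refine Continuous.lowerSemicontinuous (ENNReal.continuous_ofReal.comp
        (Real.continuous_exp.comp ?_))
      refine (continuous_const.mul (continuous_finsetSum _ fun i _ => ?_)).sub
        (continuous_const.mul (continuous_finsetSum _ fun i _ => ?_))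
      · exact (by fun_prop : Continuous fun q : (Fin n → ℝ) × (κ → ℝ) => q.1 i).mul
          (((hV t i).comp continuous_snd).sub continuous_const)
      · exact (((hV t i).comp continuous_snd).sub continuous_const).pow 2
    · have : Measurable fun q : (Fin n → ℝ) × (κ → ℝ) => supMean V q.2 :=
        (measurable_supMean hV hc).comp measurable_snd
      exact ENNReal.measurable_ofReal.comp (Real.measurable_exp.comp
        ((measurable_const.mul this).neg))
  have hsm : Measurable fun q : (Fin n → ℝ) × (κ → ℝ) => (q.1, σ • q.2) := by fun_prop
  refine ⟨fun g => ∫⁻ h, H (g, σ • h) ∂η, ?_, ?_, ?_⟩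
  · exact (hHm.comp hsm).lintegral_prod_right'
  · rw [lintegral_lintegral_swap (f := fun g h => H (g, σ • h)) (hHm.comp hsm).aemeasurable]
    calc ∫⁻ h, ∫⁻ g, H (g, σ • h) ∂_root_.stdGaussian (Fin n) ∂η ≤ ∫⁻ h, 1 ∂η := by
          refine lintegral_mono fun h => ?_
          simp only [hH]
          rw [lintegral_mul_const' _ _ ENNReal.ofReal_ne_top]
          have := wills_bound (hc (σ • h)) w hl
          calc _ ≤ ENNReal.ofReal (Real.exp (lam * supMean V (σ • h))) *
                ENNReal.ofReal (Real.exp (-(lam * supMean V (σ • h)))) := by gcongr; exact this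
            _ = 1 := by
                rw [← ENNReal.ofReal_mul (Real.exp_pos _).le, ← Real.exp_add]; simp
      _ = 1 := by simp
  · intro g hZ x t R S h1 h2 h3 h4 h5 h6
    set u : κ → ℝ := σ⁻¹ • x with hu
    set E : (κ → ℝ) → ℝ := fun h => e g (x + σ • h) t - lam * supMean V (x + σ • h) -
      (∑ k, u k * h k) - (∑ k, u k ^ 2) / 2 with hE
    have hxu : ∀ h, σ • (h + u) = x + σ • h := by
      intro h
      rw [hu, smul_add, smul_inv_smul₀ hσ.ne', add_comm]
    have hI1 : Integrable (fun h => ∑ i, g i * (V (x + σ • h) t i - w i)) η :=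
      integrable_finsetSum _ fun i _ => ((h1 i).sub (integrable_const _)).const_mul _
    have hI2 : Integrable (fun h : κ → ℝ => ∑ k, u k * h k) η :=
      integrable_finsetSum _ fun k _ => (integrable_coord k).const_mul _
    have hIe : Integrable (fun h => e g (x + σ • h) t) η :=
      (hI1.const_mul lam).sub (h3.const_mul (lam ^ 2))
    have hIE1 : Integrable (fun h => e g (x + σ • h) t - lam * supMean V (x + σ • h)) η :=
      hIe.sub (h5.const_mul lam)
    have hIE2 : Integrable (fun h => e g (x + σ • h) t - lam * supMean V (x + σ • h) -
      (∑ k, u k * h k)) η := hIE1.sub hI2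
    have hIE : Integrable E η := hIE2.sub (integrable_const _)
    have hIEv : ∫ h, E h ∂η = lam * ∑ i, g i * (V x t i - w i) -
        lam ^ 2 * ∫ h, ∑ i, (V (x + σ • h) t i - w i) ^ 2 ∂η -
        lam * ∫ h, supMean V (x + σ • h) ∂η - (∑ k, u k ^ 2) / 2 := by
      have a1 : ∫ h, ∑ i, g i * (V (x + σ • h) t i - w i) ∂η =
          ∑ i, g i * (V x t i - w i) := by
        have b : ∀ i, Integrable (fun h => g i * (V (x + σ • h) t i - w i)) η := fun i =>
          ((h1 i).sub (integrable_const _)).const_mul _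
        rw [integral_finsetSum _ fun i _ => b i]
        refine Finset.sum_congr rfl fun i _ => ?_
        rw [integral_const_mul, integral_sub (h1 i) (integrable_const _), h2 i]
        simp
      have a2 : ∫ h : κ → ℝ, ∑ k, u k * h k ∂η = 0 := by
        rw [integral_finsetSum _ fun k _ => (integrable_coord k).const_mul _]
        refine Finset.sum_eq_zero fun k _ => ?_
        rw [integral_const_mul, integral_coord, mul_zero]
      simp only [hE]
      rw [integral_sub hIE2 (integrable_const _), integral_sub hIE1 hI2,
        integral_sub hIe (h5.const_mul lam), a2]
      simp only [he]
      rw [integral_sub (hI1.const_mul lam) (h3.const_mul (lam ^ 2)), integral_const_mul,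
        integral_const_mul, integral_const_mul, a1]
      simp
    have hlow : ∫⁻ h, ENNReal.ofReal (E h + 1) ∂η ≤ ∫⁻ h, H (g, σ • h) ∂η := by
      have hm : Measurable fun h : κ → ℝ => H (g, σ • h) :=
        hHm.comp (by fun_prop : Measurable fun h : κ → ℝ => (g, σ • h))
      rw [lintegral_stdGaussian_shift u hm]
      refine lintegral_mono fun h => ?_
      simp only [hxu]
      calc ENNReal.ofReal (E h + 1) ≤ ENNReal.ofReal (Real.exp (E h)) :=
            ENNReal.ofReal_le_ofReal (Real.add_one_le_exp _)
        _ = ENNReal.ofReal (Real.exp (-(∑ k, u k * h k) - (∑ k, u k ^ 2) / 2)) *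
            (ENNReal.ofReal (Real.exp (e g (x + σ • h) t)) *
              ENNReal.ofReal (Real.exp (-(lam * supMean V (x + σ • h))))) := by
            rw [← ENNReal.ofReal_mul (Real.exp_pos _).le, ← ENNReal.ofReal_mul (Real.exp_pos _).le,
              ← Real.exp_add, ← Real.exp_add]
            congr 2
            simp only [hE]
            ring
        _ ≤ _ := by
            simp only [hH]
            gcongr
            exact le_iSup (fun t => ENNReal.ofReal (Real.exp (e g (x + σ • h) t))) t
    have hfin := integral_le_toReal_lintegral (hIE.add (integrable_const 1)) hZ hlow
    simp only [Pi.add_apply] at hfin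
    rw [integral_add hIE (integrable_const 1), hIEv] at hfin
    simp only [integral_const, probReal_univ, smul_eq_mul, mul_one] at hfin
    have hus : (∑ k, u k ^ 2) / 2 = (∑ k, x k ^ 2) / (2 * σ ^ 2) := by
      have : ∀ k, u k ^ 2 = x k ^ 2 / σ ^ 2 := fun k => by
        simp only [hu, Pi.smul_apply, smul_eq_mul]
        field_simp
      simp only [this]
      rw [← Finset.sum_div]
      field_simp
    have := mul_le_mul_of_nonneg_left h4 (sq_nonneg lam)
    have := mul_le_mul_of_nonneg_left h6 hl.le
    rw [hus] at hfin
    linarith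

end Variational

/-- The Gaussian mean of the supremum over `W` of the process `(x, t) ↦ ⟨g, V x t⟩`, bounded by
the second moment `R` and the smoothed conditional suprema `S` of its Gaussian regularisation. -/
lemma integral_sSup_le_of_smoothing {κ τ : Type*} [Fintype κ] {n : ℕ} [Nonempty τ]
    {V : (κ → ℝ) → τ → Fin n → ℝ} {c : (κ → ℝ) → ℝ}
    (hV : ∀ t i, Continuous fun y => V y t i) (hc : ∀ y t i, |V y t i| ≤ c y)
    (w : Fin n → ℝ) {lam σ : ℝ} (hl : 0 < lam) (hσ : 0 < σ)
    (W : Set ((κ → ℝ) × τ)) (hW : W.Nonempty) {D R S : ℝ} (hD0 : 0 ≤ D) (hR0 : 0 ≤ R)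
    (hS0 : 0 ≤ S)
    (hD : ∀ z ∈ W, ∑ k, z.1 k ^ 2 ≤ D)
    (h1 : ∀ z ∈ W, ∀ i, Integrable (fun h => V (z.1 + σ • h) z.2 i) (_root_.stdGaussian κ))
    (h2 : ∀ z ∈ W, ∀ i, ∫ h, V (z.1 + σ • h) z.2 i ∂_root_.stdGaussian κ = V z.1 z.2 i)
    (h3 : ∀ z ∈ W, Integrable (fun h => ∑ i, (V (z.1 + σ • h) z.2 i - w i) ^ 2)
      (_root_.stdGaussian κ))
    (h4 : ∀ z ∈ W, ∫ h, ∑ i, (V (z.1 + σ • h) z.2 i - w i) ^ 2 ∂_root_.stdGaussian κ ≤ R)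
    (h5 : ∀ z ∈ W, Integrable (fun h => supMean V (z.1 + σ • h)) (_root_.stdGaussian κ))
    (h6 : ∀ z ∈ W, ∫ h, supMean V (z.1 + σ • h) ∂_root_.stdGaussian κ ≤ S) :
    ∫ g, sSup {s : ℝ | ∃ z ∈ W, s = ∑ i, g i * V z.1 z.2 i} ∂_root_.stdGaussian (Fin n) ≤
      D / (2 * σ ^ 2) / lam + lam * R + S := by
  set γ := _root_.stdGaussian (Fin n)
  set F : (Fin n → ℝ) → ℝ := fun g => sSup {s : ℝ | ∃ z ∈ W, s = ∑ i, g i * V z.1 z.2 i} with hF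
  by_cases hFi : Integrable F γ
  swap
  · rw [integral_undef hFi]
    positivity
  obtain ⟨Z, hZm, hZ1, hZ⟩ := exists_variational_bound hV hc w hl hσ
  have hZtop : ∫⁻ g, Z g ∂γ ≠ ∞ := (hZ1.trans_lt ENNReal.one_lt_top).ne
  have hZi : Integrable (fun g => (Z g).toReal) γ :=
    integrable_toReal_of_lintegral_ne_top hZm.aemeasurable hZtop
  have hZv : ∫ g, (Z g).toReal ∂γ ≤ 1 := by
    rw [integral_toReal hZm.aemeasurable (ae_lt_top hZm hZtop)]
    exact ENNReal.toReal_le_of_le_ofReal zero_le_one (by simpa using hZ1)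
  have hwi : Integrable (fun g : Fin n → ℝ => ∑ i, g i * w i) γ :=
    integrable_finsetSum _ fun i _ => (integrable_coord i).mul_const _
  have hwv : ∫ g : Fin n → ℝ, ∑ i, g i * w i ∂γ = 0 := by
    rw [integral_finsetSum _ fun i _ => (integrable_coord i).mul_const _]
    exact Finset.sum_eq_zero fun i _ => by rw [integral_mul_const, integral_coord, zero_mul]
  set K : ℝ := (D / (2 * σ ^ 2) - 1) / lam + lam * R + S with hK
  have hpt : ∀ᵐ g ∂γ, F g ≤ (Z g).toReal * lam⁻¹ + ∑ i, g i * w i + K := by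
    filter_upwards [ae_lt_top hZm hZtop] with g hg
    refine csSup_le ?_ ?_
    · obtain ⟨z, hz⟩ := hW
      exact ⟨_, z, hz, rfl⟩
    · rintro _ ⟨z, hz, rfl⟩
      have := hZ g hg.ne z.1 z.2 R S (h1 z hz) (h2 z hz) (h3 z hz) (h4 z hz) (h5 z hz) (h6 z hz)
      have hD' : (∑ k, z.1 k ^ 2) / (2 * σ ^ 2) ≤ D / (2 * σ ^ 2) := by
        gcongr
        exact hD z hz
      have e : ∑ i, g i * (V z.1 z.2 i - w i) = ∑ i, g i * V z.1 z.2 i - ∑ i, g i * w i := by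
        rw [← Finset.sum_sub_distrib]
        exact Finset.sum_congr rfl fun i _ => by ring
      rw [e] at this
      have h7 : lam * ∑ i, g i * V z.1 z.2 i ≤
          lam * ((Z g).toReal * lam⁻¹ + ∑ i, g i * w i + K) := by
        have : lam * ((Z g).toReal * lam⁻¹ + ∑ i, g i * w i + K) =
            (Z g).toReal + lam * ∑ i, g i * w i + (D / (2 * σ ^ 2) - 1) + lam ^ 2 * R +
              lam * S := by
          rw [hK]
          generalize D / (2 * σ ^ 2) = q
          field_simp
          ring
        linarith
      exact le_of_mul_le_mul_left h7 hl
  have hI1 : Integrable (fun g => (Z g).toReal * lam⁻¹ + ∑ i, g i * w i) γ :=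
    (hZi.mul_const _).add hwi
  calc ∫ g, F g ∂γ ≤ ∫ g, ((Z g).toReal * lam⁻¹ + ∑ i, g i * w i + K) ∂γ :=
        integral_mono_ae hFi (hI1.add (integrable_const K)) hpt
    _ = (∫ g, (Z g).toReal ∂γ) * lam⁻¹ + K := by
        rw [integral_add hI1 (integrable_const K), integral_add (hZi.mul_const _) hwi,
          integral_mul_const, hwv]
        simp
    _ ≤ 1 * lam⁻¹ + K := by gcongr
    _ = _ := by
        rw [hK]
        generalize D / (2 * σ ^ 2) = q
        field_simp
        ring

/-! ### Moments of multilinear forms in Gaussian vectors -/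

lemma measurePreserving_uncurry_stdGaussian (K ι : Type*) [Fintype K] [Fintype ι] :
    MeasurePreserving (fun (y : K → ι → ℝ) (q : K × ι) => y q.1 q.2)
      (Measure.pi fun _ : K => _root_.stdGaussian ι) (_root_.stdGaussian (K × ι)) := by
  have hm : Measurable fun (y : K → ι → ℝ) (q : K × ι) => y q.1 q.2 := by
    refine measurable_pi_lambda _ fun q => ?_
    fun_prop
  refine ⟨hm, ?_⟩
  symm
  refine Measure.pi_eq fun S hS => ?_
  rw [Measure.map_apply hm (MeasurableSet.univ_pi hS)]
  have : (fun (y : K → ι → ℝ) (q : K × ι) => y q.1 q.2) ⁻¹' Set.univ.pi S =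
      Set.univ.pi fun k => Set.univ.pi fun i => S (k, i) := by
    ext y
    simp [Set.mem_pi]
  rw [this, Measure.pi_pi, Fintype.prod_prod_type]
  refine Finset.prod_congr rfl fun k _ => ?_
  rw [_root_.stdGaussian, Measure.pi_pi]

lemma integral_stdGaussian_prod_blocks {K ι : Type*} [Fintype K] [Fintype ι]
    (f : K → (ι → ℝ) → ℝ) (hf : ∀ k, Measurable (f k)) :
    ∫ h : K × ι → ℝ, ∏ k, f k (fun i => h (k, i)) ∂_root_.stdGaussian (K × ι) =
      ∏ k, ∫ y, f k y ∂_root_.stdGaussian ι := by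
  rw [← (measurePreserving_uncurry_stdGaussian K ι).map_eq, integral_map]
  · exact integral_fintype_prod_eq_prod (μ := fun _ : K => _root_.stdGaussian ι) f
  · exact (measurePreserving_uncurry_stdGaussian K ι).measurable.aemeasurable
  · refine (Finset.measurable_prod _ fun k _ => ?_).aestronglyMeasurable
    exact (hf k).comp (by fun_prop)

lemma integral_coord_mul_coord {ι : Type*} [Fintype ι] (i j : ι) :
    ∫ ω : ι → ℝ, ω i * ω j ∂_root_.stdGaussian ι = if i = j then 1 else 0 := by
  split_ifs with h
  · subst h
    have h2 := integral_map (μ := _root_.stdGaussian ι) (φ := fun ω : ι → ℝ => ω i)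
      (f := fun s => s * s) (measurable_pi_apply i).aemeasurable (by fun_prop)
    have h3 : (_root_.stdGaussian ι).map (fun ω : ι → ℝ => ω i) = gaussianReal 0 1 :=
      (measurePreserving_eval (fun _ : ι => gaussianReal 0 1) i).map_eq
    rw [h3] at h2
    rw [← h2]
    have h4 := variance_eq_integral (μ := gaussianReal 0 1) (X := fun s => s) (by fun_prop)
    rw [variance_fun_id_gaussianReal] at h4
    simp only [integral_id_gaussianReal, sub_zero] at h4
    simpa [pow_two] using h4.symm
  · have hi : iIndepFun (fun i (ω : ι → ℝ) => ω i) (_root_.stdGaussian ι) :=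
      iIndepFun_pi (μ := fun _ : ι => gaussianReal 0 1) (X := fun _ s => s)
        (fun i => by fun_prop)
    have := (hi.indepFun h).integral_mul_eq_mul_integral
      (measurable_pi_apply i).aestronglyMeasurable (measurable_pi_apply j).aestronglyMeasurable
    simp only [Pi.mul_apply] at this
    rw [this, integral_coord, zero_mul]

lemma integrable_exp_sum_abs_affine {ι : Type*} [Fintype ι] (c σ : ℝ) (hc : 0 ≤ c) (x : ι → ℝ) :
    Integrable (fun h : ι → ℝ => Real.exp (c * ∑ q, |(x + σ • h) q|)) (_root_.stdGaussian ι) := by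
  have h := (integrable_exp_sum_abs ι (c * |σ|)).const_mul (Real.exp (c * ∑ q, |x q|))
  refine h.mono' ?_ (ae_of_all _ fun ω => ?_)
  · refine Continuous.aestronglyMeasurable ?_
    fun_prop
  · rw [Real.norm_eq_abs, abs_of_pos (Real.exp_pos _), ← Real.exp_add]
    refine Real.exp_le_exp.2 ?_
    rw [mul_assoc, ← mul_add]
    refine mul_le_mul_of_nonneg_left ?_ hc
    rw [Finset.mul_sum, ← Finset.sum_add_distrib]
    refine Finset.sum_le_sum fun q _ => ?_
    simp only [Pi.add_apply, Pi.smul_apply, smul_eq_mul]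
    exact (abs_add_le _ _).trans (by rw [abs_mul])

lemma abs_prod_le_exp {K : Type*} [Fintype K] {n : ℕ} (y : K × Fin n → ℝ) (i : K → Fin n) :
    |∏ k, y (k, i k)| ≤ Real.exp (∑ q, |y q|) := by
  rw [Finset.abs_prod]
  calc ∏ k, |y (k, i k)| ≤ ∏ k, Real.exp |y (k, i k)| :=
        Finset.prod_le_prod (fun _ _ => abs_nonneg _) fun k _ =>
          by linarith [Real.add_one_le_exp |y (k, i k)|]
    _ = Real.exp (∑ k, |y (k, i k)|) := (Real.exp_sum _ _).symm
    _ ≤ _ := by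
        refine Real.exp_le_exp.2 ?_
        rw [Fintype.sum_prod_type]
        exact Finset.sum_le_sum fun k _ =>
          Finset.single_le_sum (f := fun j => |y (k, j)|) (fun _ _ => abs_nonneg _)
            (Finset.mem_univ (i k))

section Poly

variable {K τ : Type*} [Fintype K] {n : ℕ}

/-- The vector of multilinear forms `y ↦ ∑_{i'} b t i₁ i' ∏ₖ y (k, i' k)`, indexed by `i₁`. -/
noncomputable def polyV (b : τ → Fin n → (K → Fin n) → ℝ) (y : K × Fin n → ℝ) (t : τ)
    (i : Fin n) : ℝ :=
  ∑ i' : K → Fin n, b t i i' * ∏ k, y (k, i' k)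

variable {b : τ → Fin n → (K → Fin n) → ℝ} {cb : ℝ}

lemma continuous_polyV (t : τ) (i : Fin n) : Continuous fun y => polyV b y t i := by
  unfold polyV
  fun_prop

lemma abs_polyV_le (hb : ∀ t i i', |b t i i'| ≤ cb) (y : K × Fin n → ℝ) (t : τ) (i : Fin n) :
    |polyV b y t i| ≤ Fintype.card (K → Fin n) * cb * Real.exp (∑ q, |y q|) := by
  unfold polyV
  refine (Finset.abs_sum_le_sum_abs _ _).trans ?_
  calc ∑ i' : K → Fin n, |b t i i' * ∏ k, y (k, i' k)|
      ≤ ∑ i' : K → Fin n, cb * Real.exp (∑ q, |y q|) := by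
        refine Finset.sum_le_sum fun i' _ => ?_
        rw [abs_mul]
        exact mul_le_mul (hb t i i') (abs_prod_le_exp y i') (abs_nonneg _)
          ((abs_nonneg _).trans (hb t i i'))
    _ = _ := by simp [mul_assoc]

lemma integrable_monomial (σ : ℝ) (x : K × Fin n → ℝ) (i : K → Fin n) :
    Integrable (fun h : K × Fin n → ℝ => ∏ k, (x + σ • h) (k, i k))
      (_root_.stdGaussian (K × Fin n)) := by
  refine (integrable_exp_sum_abs_affine 1 σ zero_le_one x).mono' ?_ (ae_of_all _ fun h => ?_)
  · refine Continuous.aestronglyMeasurable ?_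
    fun_prop
  · rw [one_mul]
    exact abs_prod_le_exp (x + σ • h) i

lemma integrable_monomial_mul (σ : ℝ) (x : K × Fin n → ℝ) (i j : K → Fin n) :
    Integrable (fun h : K × Fin n → ℝ =>
      (∏ k, (x + σ • h) (k, i k)) * ∏ k, (x + σ • h) (k, j k))
      (_root_.stdGaussian (K × Fin n)) := by
  refine (integrable_exp_sum_abs_affine 2 σ zero_le_two x).mono' ?_ (ae_of_all _ fun h => ?_)
  · refine Continuous.aestronglyMeasurable ?_
    fun_prop
  · rw [Real.norm_eq_abs, abs_mul, two_mul, Real.exp_add]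
    exact mul_le_mul (abs_prod_le_exp (x + σ • h) i) (abs_prod_le_exp (x + σ • h) j)
      (abs_nonneg _) (Real.exp_pos _).le

lemma integral_monomial (σ : ℝ) (x : K × Fin n → ℝ) (i : K → Fin n) :
    ∫ h : K × Fin n → ℝ, ∏ k, (x + σ • h) (k, i k) ∂_root_.stdGaussian (K × Fin n) =
      ∏ k, x (k, i k) := by
  have := integral_stdGaussian_prod_blocks (K := K) (ι := Fin n)
    (fun k y => x (k, i k) + σ * y (i k)) (fun k => by fun_prop)
  simp only [Pi.add_apply, Pi.smul_apply, smul_eq_mul]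
  rw [this]
  refine Finset.prod_congr rfl fun k _ => ?_
  rw [integral_add (integrable_const _) ((integrable_coord _).const_mul _), integral_const_mul,
    integral_coord]
  simp

lemma integrable_coord_mul_coord {ι : Type*} [Fintype ι] (i j : ι) :
    Integrable (fun ω : ι → ℝ => ω i * ω j) (_root_.stdGaussian ι) := by
  refine (integrable_exp_sum_abs ι 2).mono' ?_ (ae_of_all _ fun ω => ?_)
  · exact ((measurable_pi_apply i).mul (measurable_pi_apply j)).aestronglyMeasurable
  · rw [Real.norm_eq_abs, abs_mul]
    refine (mul_le_mul (sum_abs_le_exp ω i) (sum_abs_le_exp ω j) (abs_nonneg _)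
      (Real.exp_pos _).le).trans ?_
    rw [← Real.exp_add]
    exact Real.exp_le_exp.2 (by linarith)

lemma integral_monomial_mul (σ : ℝ) (x : K × Fin n → ℝ) (i j : K → Fin n) :
    ∫ h : K × Fin n → ℝ, (∏ k, (x + σ • h) (k, i k)) * ∏ k, (x + σ • h) (k, j k)
        ∂_root_.stdGaussian (K × Fin n) =
      ∏ k, (x (k, i k) * x (k, j k) + σ ^ 2 * if i k = j k then 1 else 0) := by
  have := integral_stdGaussian_prod_blocks (K := K) (ι := Fin n)
    (fun k y => (x (k, i k) + σ * y (i k)) * (x (k, j k) + σ * y (j k))) (fun k => by fun_prop)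
  simp only [Pi.add_apply, Pi.smul_apply, smul_eq_mul, ← Finset.prod_mul_distrib]
  rw [this]
  refine Finset.prod_congr rfl fun k _ => ?_
  have e : ∀ y : Fin n → ℝ, (x (k, i k) + σ * y (i k)) * (x (k, j k) + σ * y (j k)) =
      x (k, i k) * x (k, j k) + (x (k, i k) * σ) * y (j k) + (x (k, j k) * σ) * y (i k) +
        σ ^ 2 * (y (i k) * y (j k)) := fun y => by ring
  simp only [e]
  have i1 := (integrable_coord (j k)).const_mul (x (k, i k) * σ)
  have i2 := (integrable_coord (i k)).const_mul (x (k, j k) * σ)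
  have i3 := (integrable_coord_mul_coord (i k) (j k)).const_mul (σ ^ 2)
  have i0 : Integrable (fun _ : Fin n → ℝ => x (k, i k) * x (k, j k))
    (_root_.stdGaussian (Fin n)) := integrable_const _
  have i4 : Integrable (fun y : Fin n → ℝ => x (k, i k) * x (k, j k) +
    (x (k, i k) * σ) * y (j k)) (_root_.stdGaussian (Fin n)) := i0.add i1
  have i5 : Integrable (fun y : Fin n → ℝ => x (k, i k) * x (k, j k) +
    (x (k, i k) * σ) * y (j k) + (x (k, j k) * σ) * y (i k)) (_root_.stdGaussian (Fin n)) :=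
    i4.add i2
  rw [integral_add i5 i3, integral_add i4 i2, integral_add i0 i1,
    integral_const_mul _ (fun y : Fin n → ℝ => y (j k)),
    integral_const_mul _ (fun y : Fin n → ℝ => y (i k)),
    integral_const_mul _ (fun y : Fin n → ℝ => y (i k) * y (j k)), integral_coord, integral_coord,
    integral_coord_mul_coord]
  simp

lemma integrable_polyV (σ : ℝ) (x : K × Fin n → ℝ) (t : τ) (i : Fin n) :
    Integrable (fun h => polyV b (x + σ • h) t i) (_root_.stdGaussian (K × Fin n)) :=
  integrable_finsetSum _ fun i' _ => (integrable_monomial σ x i').const_mul _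

lemma integral_polyV (σ : ℝ) (x : K × Fin n → ℝ) (t : τ) (i : Fin n) :
    ∫ h, polyV b (x + σ • h) t i ∂_root_.stdGaussian (K × Fin n) = polyV b x t i := by
  unfold polyV
  rw [integral_finsetSum _ fun i' _ => (integrable_monomial σ x i').const_mul _]
  refine Finset.sum_congr rfl fun i' _ => ?_
  rw [integral_const_mul, integral_monomial]

/-- The squared Euclidean norm, over the indices `u ∈ [n]^I`, of the partial contraction of `b t i`
with `x` in the coordinates outside `I`. -/
noncomputable def partQ (b : τ → Fin n → (K → Fin n) → ℝ) (x : K × Fin n → ℝ) (t : τ)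
    (I : Finset K) (i : Fin n) : ℝ :=
  ∑ u : {k // k ∈ I} → Fin n, (∑ i' : K → Fin n, if (fun k : {k // k ∈ I} => i' k) = u then
    b t i i' * ∏ k ∈ Finset.univ \ I, x (k, i' k) else 0) ^ 2

lemma partQ_eq (x : K × Fin n → ℝ) (t : τ) (I : Finset K) (i : Fin n) :
    partQ b x t I i = ∑ i' : K → Fin n, ∑ j' : K → Fin n, b t i i' * b t i j' *
      ((∏ k ∈ I, if i' k = j' k then 1 else 0) *
        ∏ k ∈ Finset.univ \ I, (x (k, i' k) * x (k, j' k))) := by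
  unfold partQ
  simp only [pow_two, Finset.sum_mul_sum]
  rw [Finset.sum_comm]
  refine Finset.sum_congr rfl fun i' _ => ?_
  rw [Finset.sum_comm]
  refine Finset.sum_congr rfl fun j' _ => ?_
  simp only [ite_mul, zero_mul, Finset.sum_ite_eq, Finset.mem_univ, if_true]
  have : (fun k : {k // k ∈ I} => j' k) = (fun k : {k // k ∈ I} => i' k) ↔
      ∀ k ∈ I, i' k = j' k := by
    simp [funext_iff, eq_comm]
  rw [Finset.prod_ite_zero, Finset.prod_mul_distrib]
  simp only [this, Finset.prod_const_one]
  split_ifs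
  · ring
  · ring

lemma partQ_empty (x : K × Fin n → ℝ) (t : τ) (i : Fin n) :
    partQ b x t ∅ i = polyV b x t i ^ 2 := by
  rw [partQ_eq, polyV, pow_two, Finset.sum_mul_sum]
  refine Finset.sum_congr rfl fun i' _ => Finset.sum_congr rfl fun j' _ => ?_
  simp only [Finset.prod_empty, Finset.sdiff_empty, Finset.prod_mul_distrib]
  ring

lemma integrable_polyV_sq (σ : ℝ) (x : K × Fin n → ℝ) (t : τ) (i : Fin n) :
    Integrable (fun h => polyV b (x + σ • h) t i ^ 2) (_root_.stdGaussian (K × Fin n)) := by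
  unfold polyV
  simp only [pow_two, Finset.sum_mul_sum]
  refine integrable_finsetSum _ fun i' _ => integrable_finsetSum _ fun j' _ => ?_
  refine ((integrable_monomial_mul σ x i' j').const_mul (b t i i' * b t i j')).congr
    (ae_of_all _ fun h => ?_)
  simp only
  ring

lemma integral_polyV_sq (σ : ℝ) (x : K × Fin n → ℝ) (t : τ) (i : Fin n) :
    ∫ h, polyV b (x + σ • h) t i ^ 2 ∂_root_.stdGaussian (K × Fin n) =
      ∑ I : Finset K, σ ^ (2 * I.card) * partQ b x t I i := by
  have e : ∀ h : K × Fin n → ℝ, polyV b (x + σ • h) t i ^ 2 =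
      ∑ i' : K → Fin n, ∑ j' : K → Fin n, (b t i i' * b t i j') *
        ((∏ k, (x + σ • h) (k, i' k)) * ∏ k, (x + σ • h) (k, j' k)) := by
    intro h
    rw [polyV, pow_two, Finset.sum_mul_sum]
    exact Finset.sum_congr rfl fun i' _ => Finset.sum_congr rfl fun j' _ => by ring
  simp only [e]
  rw [integral_finsetSum _ fun i' _ => integrable_finsetSum _ fun j' _ =>
    (integrable_monomial_mul σ x i' j').const_mul _]
  simp only [partQ_eq, Finset.mul_sum]
  rw [Finset.sum_comm]
  refine Finset.sum_congr rfl fun i' _ => ?_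
  rw [integral_finsetSum _ fun j' _ => (integrable_monomial_mul σ x i' j').const_mul _,
    Finset.sum_comm]
  refine Finset.sum_congr rfl fun j' _ => ?_
  rw [integral_const_mul, integral_monomial_mul]
  simp only [add_comm (x _ * x _)]
  rw [Finset.prod_add, Finset.powerset_univ, Finset.mul_sum]
  refine Finset.sum_congr rfl fun I _ => ?_
  rw [Finset.prod_mul_distrib (s := I), Finset.prod_const, ← pow_mul]
  ring

lemma integrable_polyV_sub_sq (σ : ℝ) (x : K × Fin n → ℝ) (t : τ) (w : Fin n → ℝ) :
    Integrable (fun h => ∑ i, (polyV b (x + σ • h) t i - w i) ^ 2)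
      (_root_.stdGaussian (K × Fin n)) := by
  refine integrable_finsetSum _ fun i _ => ?_
  refine (((integrable_polyV_sq (b := b) σ x t i).sub
    ((integrable_polyV (b := b) σ x t i).const_mul (2 * w i))).add
    (integrable_const (w i ^ 2))).congr (ae_of_all _ fun h => ?_)
  simp only [Pi.add_apply, Pi.sub_apply]
  ring

/-- Second moment of the smoothed form: the unsmoothed value plus one partial contraction for
every nonempty set of smoothed coordinates. -/
lemma integral_polyV_sub_sq (σ : ℝ) (x : K × Fin n → ℝ) (t : τ) (w : Fin n → ℝ) :
    ∫ h, ∑ i, (polyV b (x + σ • h) t i - w i) ^ 2 ∂_root_.stdGaussian (K × Fin n) =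
      ∑ i, (polyV b x t i - w i) ^ 2 +
        ∑ I ∈ Finset.univ.erase ∅, σ ^ (2 * I.card) * ∑ i, partQ b x t I i := by
  have e : ∀ (h : K × Fin n → ℝ) i, (polyV b (x + σ • h) t i - w i) ^ 2 =
      polyV b (x + σ • h) t i ^ 2 - (2 * w i) * polyV b (x + σ • h) t i + w i ^ 2 :=
    fun h i => by ring
  have i1 := fun i => integrable_polyV_sq (b := b) σ x t i
  have i2 := fun i => (integrable_polyV (b := b) σ x t i).const_mul (2 * w i)
  simp only [e]
  have i3 : ∀ i, Integrable (fun h => polyV b (x + σ • h) t i ^ 2 -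
      (2 * w i) * polyV b (x + σ • h) t i) (_root_.stdGaussian (K × Fin n)) :=
    fun i => (i1 i).sub (i2 i)
  have i4 : ∀ i, Integrable (fun h => polyV b (x + σ • h) t i ^ 2 -
      (2 * w i) * polyV b (x + σ • h) t i + w i ^ 2) (_root_.stdGaussian (K × Fin n)) :=
    fun i => (i3 i).add (integrable_const _)
  rw [integral_finsetSum _ fun i _ => i4 i]
  simp only [Finset.mul_sum]
  rw [Finset.sum_comm, ← Finset.sum_add_distrib]
  refine Finset.sum_congr rfl fun i _ => ?_
  rw [integral_add (i3 i) (integrable_const _), integral_sub (i1 i) (i2 i), integral_const_mul, integral_polyV, integral_polyV_sq,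
    ← Finset.add_sum_erase _ _ (Finset.mem_univ (∅ : Finset K)), partQ_empty]
  simp
  ring

end Poly

/-! ### Smoothed conditional suprema -/

section Mix

variable {K τ : Type*} [Fintype K] {n : ℕ}

/-- The array equal to `h` in the blocks belonging to `I` and to `x` in the others. -/
noncomputable def mixV (I : Finset K) (x h : K × Fin n → ℝ) : K × Fin n → ℝ :=
  fun q => if q.1 ∈ I then h q else x q

set_option linter.unusedSectionVars false in
lemma measurable_mixV (I : Finset K) (x : K × Fin n → ℝ) : Measurable (mixV I x) := by
  refine measurable_pi_lambda _ fun q => ?_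
  unfold mixV
  split_ifs
  · fun_prop
  · fun_prop

lemma prod_mixV (I : Finset K) (x h : K × Fin n → ℝ) (i : K → Fin n) :
    ∏ k, mixV I x h (k, i k) = (∏ k ∈ I, h (k, i k)) * ∏ k ∈ Finset.univ \ I, x (k, i k) := by
  rw [← Finset.prod_sdiff (Finset.subset_univ I), mul_comm]
  congr 1
  · exact Finset.prod_congr rfl fun k hk => by simp [mixV, hk]
  · exact Finset.prod_congr rfl fun k hk => by simp [mixV, (Finset.mem_sdiff.1 hk).2]

variable {b : τ → Fin n → (K → Fin n) → ℝ} {cb : ℝ}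

lemma polyV_add_smul (σ : ℝ) (x h : K × Fin n → ℝ) (t : τ) (i : Fin n) :
    polyV b (x + σ • h) t i = ∑ I : Finset K, σ ^ I.card * polyV b (mixV I x h) t i := by
  unfold polyV
  simp only [Finset.mul_sum]
  rw [Finset.sum_comm]
  refine Finset.sum_congr rfl fun i' _ => ?_
  simp only [Pi.add_apply, Pi.smul_apply, smul_eq_mul, add_comm (x _)]
  rw [Finset.prod_add, Finset.powerset_univ, Finset.mul_sum]
  refine Finset.sum_congr rfl fun I _ => ?_
  rw [prod_mixV, Finset.prod_mul_distrib, Finset.prod_const]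
  ring

lemma abs_supMean_polyV_le [Nonempty τ] (hb : ∀ t i i', |b t i i'| ≤ cb) (y : K × Fin n → ℝ) :
    |supMean (polyV b) y| ≤ Fintype.card (K → Fin n) * cb * Real.exp (∑ q, |y q|) *
      ∫ g : Fin n → ℝ, ∑ i, |g i| ∂_root_.stdGaussian (Fin n) := by
  unfold supMean
  rw [← integral_const_mul, ← Real.norm_eq_abs]
  refine norm_integral_le_of_norm_le ?_ (ae_of_all _ fun g => ?_)
  · exact (integrable_finsetSum _ fun i _ => (integrable_coord i).abs).const_mul _
  · exact abs_iSup_linear_le (abs_polyV_le hb y) g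

lemma supMean_nonneg [Nonempty τ] (hb : ∀ t i i', |b t i i'| ≤ cb) (y : K × Fin n → ℝ) :
    0 ≤ supMean (polyV b) y := by
  obtain ⟨t⟩ := ‹Nonempty τ›
  have h0 : ∫ g : Fin n → ℝ, ∑ i, g i * polyV b y t i ∂_root_.stdGaussian (Fin n) = 0 := by
    rw [integral_finsetSum _ fun i _ => (integrable_coord i).mul_const _]
    exact Finset.sum_eq_zero fun i _ => by rw [integral_mul_const, integral_coord, zero_mul]
  rw [← h0]
  have : Nonempty τ := ⟨t⟩
  refine integral_mono (integrable_finsetSum _ fun i _ => (integrable_coord i).mul_const _)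
    (integrable_iSup_linear (abs_polyV_le hb y)) fun g => ?_
  exact le_ciSup (bddAbove_linear (abs_polyV_le hb y) g) t

lemma integrable_supMean_affine [Nonempty τ] (hb : ∀ t i i', |b t i i'| ≤ cb) (σ : ℝ)
    (x : K × Fin n → ℝ) :
    Integrable (fun h => supMean (polyV b) (x + σ • h)) (_root_.stdGaussian (K × Fin n)) := by
  have h1 := ((integrable_exp_sum_abs_affine 1 σ zero_le_one x).const_mul
    (Fintype.card (K → Fin n) * cb)).mul_const
      (∫ g : Fin n → ℝ, ∑ i, |g i| ∂_root_.stdGaussian (Fin n))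
  refine h1.mono' ?_ (ae_of_all _ fun h => ?_)
  · exact ((measurable_supMean continuous_polyV (abs_polyV_le hb)).comp
      (by fun_prop)).aestronglyMeasurable
  · rw [one_mul]
    exact abs_supMean_polyV_le hb (x + σ • h)

lemma sum_abs_mixV_le (I : Finset K) (x h : K × Fin n → ℝ) :
    ∑ q, |mixV I x h q| ≤ ∑ q, |x q| + 1 * ∑ q, |h q| := by
  rw [one_mul, ← Finset.sum_add_distrib]
  refine Finset.sum_le_sum fun q _ => ?_
  unfold mixV
  split_ifs
  · linarith [abs_nonneg (x q)]
  · linarith [abs_nonneg (h q)]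

lemma integrable_supMean_mixV [Nonempty τ] (hb : ∀ t i i', |b t i i'| ≤ cb) (I : Finset K)
    (x : K × Fin n → ℝ) :
    Integrable (fun h => supMean (polyV b) (mixV I x h)) (_root_.stdGaussian (K × Fin n)) := by
  have h1 := (((integrable_exp_sum_abs (K × Fin n) 1).const_mul (Real.exp (∑ q, |x q|))).const_mul
    (Fintype.card (K → Fin n) * |cb|)).mul_const
      (∫ g : Fin n → ℝ, ∑ i, |g i| ∂_root_.stdGaussian (Fin n))
  refine h1.mono' ?_ (ae_of_all _ fun h => ?_)
  · exact ((measurable_supMean continuous_polyV (abs_polyV_le hb)).comp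
      (measurable_mixV I x)).aestronglyMeasurable
  · refine (abs_supMean_polyV_le hb (mixV I x h)).trans ?_
    have h0 : 0 ≤ ∫ g : Fin n → ℝ, ∑ i, |g i| ∂_root_.stdGaussian (Fin n) :=
      integral_nonneg fun g => Finset.sum_nonneg fun i _ => abs_nonneg _
    rw [← Real.exp_add]
    gcongr
    · exact le_abs_self cb
    · exact sum_abs_mixV_le I x h

lemma supMean_affine_le [Nonempty τ] (hb : ∀ t i i', |b t i i'| ≤ cb) {σ : ℝ} (hσ : 0 ≤ σ)
    (x h : K × Fin n → ℝ) :
    supMean (polyV b) (x + σ • h) ≤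
      ∑ I : Finset K, σ ^ I.card * supMean (polyV b) (mixV I x h) := by
  have hi := fun I : Finset K =>
    (integrable_iSup_linear (abs_polyV_le hb (mixV I x h))).const_mul (σ ^ I.card)
  unfold supMean
  simp only [← integral_const_mul]
  rw [← integral_finsetSum _ fun I _ => hi I]
  refine integral_mono (integrable_iSup_linear (abs_polyV_le hb _))
    (integrable_finsetSum _ fun I _ => hi I) fun g => ?_
  refine ciSup_le fun t => ?_
  simp only [polyV_add_smul, Finset.mul_sum]
  rw [Finset.sum_comm]
  refine Finset.sum_le_sum fun I _ => ?_
  calc ∑ i, g i * (σ ^ I.card * polyV b (mixV I x h) t i)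
      = σ ^ I.card * ∑ i, g i * polyV b (mixV I x h) t i := by
        rw [Finset.mul_sum]
        exact Finset.sum_congr rfl fun i _ => by ring
    _ ≤ _ := mul_le_mul_of_nonneg_left
        (le_ciSup (bddAbove_linear (abs_polyV_le hb (mixV I x h)) g) t) (by positivity)

/-- The smoothed conditional supremum is at most the sum, over the sets `I` of blocks in which the
Gaussian part of `x + σ h` is chosen, of the corresponding decoupled chaoses. -/
lemma integral_supMean_affine_le [Nonempty τ] (hb : ∀ t i i', |b t i i'| ≤ cb) {σ : ℝ}
    (hσ : 0 ≤ σ) (x : K × Fin n → ℝ) :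
    ∫ h, supMean (polyV b) (x + σ • h) ∂_root_.stdGaussian (K × Fin n) ≤
      ∑ I : Finset K, σ ^ I.card *
        ∫ h, supMean (polyV b) (mixV I x h) ∂_root_.stdGaussian (K × Fin n) := by
  have hi := fun I : Finset K => (integrable_supMean_mixV hb I x).const_mul (σ ^ I.card)
  simp only [← integral_const_mul]
  rw [← integral_finsetSum _ fun I _ => hi I]
  exact integral_mono (integrable_supMean_affine hb σ x) (integrable_finsetSum _ fun I _ => hi I)
    fun h => supMean_affine_le hb hσ x h

end Mix

/-! ### The norms `‖A‖_{P'|P}` -/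

lemma measurePreserving_comp_stdGaussian {ι κ : Type*} [Fintype ι] [Fintype κ] {e : ι → κ}
    (he : Function.Injective e) :
    MeasurePreserving (fun ω : κ → ℝ => fun i => ω (e i)) (_root_.stdGaussian κ)
      (_root_.stdGaussian ι) := by
  have hm : Measurable fun (ω : κ → ℝ) (i : ι) => ω (e i) := by
    refine measurable_pi_lambda _ fun q => ?_
    fun_prop
  refine ⟨hm, ?_⟩
  symm
  refine Measure.pi_eq fun S hS => ?_
  rw [Measure.map_apply hm (MeasurableSet.univ_pi hS)]
  set S' : κ → Set ℝ := fun k => ⋂ (i : ι) (_ : e i = k), S i with hS'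
  have hSe : ∀ i, S' (e i) = S i := by
    intro i
    ext s
    simp only [hS', Set.mem_iInter]
    exact ⟨fun h => h i rfl, fun h j hj => he hj ▸ h⟩
  have : (fun (ω : κ → ℝ) (i : ι) => ω (e i)) ⁻¹' Set.univ.pi S = Set.univ.pi S' := by
    ext ω
    simp only [Set.mem_preimage, Set.mem_univ_pi, hS', Set.mem_iInter]
    exact ⟨fun h k i hi => hi ▸ h i, fun h i => h (e i) i rfl⟩
  rw [this, _root_.stdGaussian, Measure.pi_pi,
    ← Finset.prod_subset (Finset.subset_univ (Finset.univ.image e)), Finset.prod_image he.injOn]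
  · exact Finset.prod_congr rfl fun i _ => by rw [hSe]
  · intro k _ hk
    have : S' k = Set.univ := by
      ext s
      simp only [hS', Set.mem_iInter, Set.mem_univ, iff_true]
      intro i hi
      exact absurd (Finset.mem_image.2 ⟨i, Finset.mem_univ i, hi⟩) hk
    rw [this, measure_univ]

lemma measurePreserving_pair_stdGaussian {ι ι' κ : Type*} [Fintype ι] [Fintype ι'] [Fintype κ]
    {e : ι → κ} {e' : ι' → κ} (he : Function.Injective (Sum.elim e e')) :
    MeasurePreserving (fun ω : κ → ℝ => ((fun i => ω (e i)), (fun i => ω (e' i))))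
      (_root_.stdGaussian κ) ((_root_.stdGaussian ι).prod (_root_.stdGaussian ι')) :=
  (measurePreserving_sumPiEquivProdPi (fun _ : ι ⊕ ι' => gaussianReal 0 1)).comp
    (measurePreserving_comp_stdGaussian he)

/-- A full multi-index is the same as its first coordinate together with the others. -/
def ext0Equiv (n d : ℕ) : Fin n × (PIdx d → Fin n) ≃ (Fin (d + 1) → Fin n) where
  toFun q := ext0 q.1 q.2
  invFun i := (i 0, fun k => i k.1)
  left_inv q := by
    ext1
    · simp [ext0]
    · funext k
      simp [ext0, k.2]
  right_inv i := by
    funext k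
    by_cases h : k = 0
    · subst h; simp [ext0]
    · simp [ext0, h]

lemma sum_ext0 {n d : ℕ} (f : (Fin (d + 1) → Fin n) → ℝ) :
    ∑ i, f i = ∑ i1 : Fin n, ∑ i' : PIdx d → Fin n, f (ext0 i1 i') := by
  rw [← Fintype.sum_prod_type' fun i1 i' => f (ext0 i1 i')]
  exact (Equiv.sum_comp (ext0Equiv n d) f).symm

lemma ext0_zero {n d : ℕ} (i1 : Fin n) (i' : PIdx d → Fin n) : ext0 i1 i' 0 = i1 := by
  simp [ext0]

lemma ext0_val {n d : ℕ} (i1 : Fin n) (i' : PIdx d → Fin n) (k : PIdx d) :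
    ext0 i1 i' k.1 = i' k := by
  simp [ext0, k.2]

lemma abs_sSup_le_of_forall {S : Set ℝ} {B : ℝ} (h : ∀ s ∈ S, |s| ≤ B) (hB : 0 ≤ B) :
    |sSup S| ≤ B := by
  rcases S.eq_empty_or_nonempty with rfl | ⟨s, hs⟩
  · simpa using hB
  · refine abs_le.2 ⟨(abs_le.1 (h s hs)).1.trans ?_, Real.sSup_le (fun s hs => (abs_le.1 (h s hs)).2) hB⟩
    exact le_csSup ⟨B, fun s hs => (abs_le.1 (h s hs)).2⟩ hs

section Chaos

variable {n m d : ℕ} {A : (Fin (d + 1) → Fin n) → Fin m → ℝ} {T : Set (Fin m → ℝ)} {cT : ℝ}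

lemma abs_prod_gauss_le {D : ℕ} (P' : Finset (Finset (Fin D))) (ω : GIdx D n → ℝ)
    (i : Fin D → Fin n) :
    |∏ J ∈ P', ω ⟨J, fun l => i l.1⟩| ≤ Real.exp (1 * ∑ q, |ω q|) := by
  rw [Finset.abs_prod, one_mul]
  calc ∏ J ∈ P', |ω ⟨J, fun l => i l.1⟩| ≤ ∏ J ∈ P', Real.exp |ω ⟨J, fun l => i l.1⟩| :=
        Finset.prod_le_prod (fun _ _ => abs_nonneg _) fun J _ =>
          by linarith [Real.add_one_le_exp |ω ⟨J, fun l => i l.1⟩|]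
    _ = Real.exp (∑ J ∈ P', |ω ⟨J, fun l => i l.1⟩|) := (Real.exp_sum _ _).symm
    _ ≤ _ := by
        refine Real.exp_le_exp.2 ?_
        rw [Fintype.sum_sigma]
        refine (Finset.sum_le_sum fun J _ => Finset.single_le_sum
          (f := fun v : {l // l ∈ J} → Fin n => |ω ⟨J, v⟩|) (fun _ _ => abs_nonneg _)
            (Finset.mem_univ fun l : {l // l ∈ J} => i l.1)).trans ?_
        exact Finset.sum_le_sum_of_subset_of_nonneg (Finset.subset_univ _)
          fun J _ _ => Finset.sum_nonneg fun _ _ => abs_nonneg _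

lemma abs_prod_x_le {P : Finset (Finset (Fin (d + 1)))}
    {x : (I : Finset (Fin (d + 1))) → ({l // l ∈ I} → Fin n) → ℝ}
    (hx : ∀ I ∈ P, ∑ v : {l // l ∈ I} → Fin n, x I v ^ 2 ≤ 1) (i : Fin (d + 1) → Fin n) :
    |∏ I ∈ P, x I fun l => i l.1| ≤ 1 := by
  rw [Finset.abs_prod]
  refine Finset.prod_le_one (fun _ _ => abs_nonneg _) fun I hI => ?_
  rw [← sq_le_one_iff_abs_le_one]
  exact (Finset.single_le_sum (f := fun v => x I v ^ 2) (fun _ _ => sq_nonneg _)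
    (Finset.mem_univ fun l : {l // l ∈ I} => i l.1)).trans (hx I hI)

lemma bddAbove_chaosNormT (hT : ∀ t ∈ T, ∀ j, |t j| ≤ cT) (hc : 0 ≤ cT)
    (P' P : Finset (Finset (Fin (d + 1)))) :
    BddAbove { r : ℝ | ∃ x : (I : Finset (Fin (d + 1))) → ({l // l ∈ I} → Fin n) → ℝ,
    (∀ I ∈ P, ∑ v : {l // l ∈ I} → Fin n, x I v ^ 2 ≤ 1) ∧
    r = ∫ ω : GIdx (d + 1) n → ℝ,
        sSup { s : ℝ | ∃ t ∈ T, s = ∑ i : Fin (d + 1) → Fin n, ∑ j : Fin m,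
          (∏ I ∈ P, x I fun l => i l.1) * (∏ J ∈ P', ω ⟨J, fun l => i l.1⟩) *
            A i j * t j }
        ∂ _root_.stdGaussian (GIdx (d + 1) n) } := by
  refine ⟨∫ ω : GIdx (d + 1) n → ℝ, (∑ i : Fin (d + 1) → Fin n, ∑ j : Fin m, |A i j| * cT) *
    Real.exp (1 * ∑ q, |ω q|) ∂_root_.stdGaussian (GIdx (d + 1) n), ?_⟩
  rintro _ ⟨x, hx, rfl⟩
  refine (le_abs_self _).trans ?_
  rw [← Real.norm_eq_abs]
  refine norm_integral_le_of_norm_le ((integrable_exp_sum_abs _ 1).const_mul _)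
    (ae_of_all _ fun ω => ?_)
  have hpos : 0 ≤ (∑ i : Fin (d + 1) → Fin n, ∑ j : Fin m, |A i j| * cT) *
      Real.exp (1 * ∑ q, |ω q|) :=
    mul_nonneg (Finset.sum_nonneg fun i _ => Finset.sum_nonneg fun j _ =>
      mul_nonneg (abs_nonneg _) hc) (Real.exp_pos _).le
  rw [Real.norm_eq_abs]
  refine abs_sSup_le_of_forall ?_ hpos
  rintro _ ⟨t, ht, rfl⟩
  rw [Finset.sum_mul]
  refine (Finset.abs_sum_le_sum_abs _ _).trans (Finset.sum_le_sum fun i _ => ?_)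
  rw [Finset.sum_mul]
  refine (Finset.abs_sum_le_sum_abs _ _).trans (Finset.sum_le_sum fun j _ => ?_)
  rw [abs_mul, abs_mul, abs_mul]
  calc _ ≤ 1 * Real.exp (1 * ∑ q, |ω q|) * |A i j| * cT := by
        gcongr
        · exact abs_prod_x_le hx i
        · exact abs_prod_gauss_le P' ω i
        · exact hT t ht j
    _ = _ := by ring

lemma le_chaosNormT (hT : ∀ t ∈ T, ∀ j, |t j| ≤ cT) (hc : 0 ≤ cT)
    {P' P : Finset (Finset (Fin (d + 1)))}
    (x : (I : Finset (Fin (d + 1))) → ({l // l ∈ I} → Fin n) → ℝ)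
    (hx : ∀ I ∈ P, ∑ v : {l // l ∈ I} → Fin n, x I v ^ 2 ≤ 1) :
    ∫ ω : GIdx (d + 1) n → ℝ,
        sSup { s : ℝ | ∃ t ∈ T, s = ∑ i : Fin (d + 1) → Fin n, ∑ j : Fin m,
          (∏ I ∈ P, x I fun l => i l.1) * (∏ J ∈ P', ω ⟨J, fun l => i l.1⟩) *
            A i j * t j }
        ∂ _root_.stdGaussian (GIdx (d + 1) n) ≤ chaosNormT A T P' P :=
  le_csSup (bddAbove_chaosNormT hT hc P' P) ⟨x, hx, rfl⟩

lemma chaosNormT_nonneg (hne : T.Nonempty) (hsym : T = -T)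
    (P' P : Finset (Finset (Fin (d + 1)))) : 0 ≤ chaosNormT A T P' P := by
  refine Real.sSup_nonneg' ⟨_, ⟨fun _ _ => 0, by simp, rfl⟩, ?_⟩
  refine integral_nonneg fun ω => ?_
  obtain ⟨t, ht⟩ := hne
  have ht' : -t ∈ T := by
    rw [hsym]; simpa using ht
  set F : (Fin m → ℝ) → ℝ := fun t => ∑ i : Fin (d + 1) → Fin n, ∑ j : Fin m,
          (∏ I ∈ P, (0 : ℝ)) * (∏ J ∈ P', ω ⟨J, fun l => i l.1⟩) * A i j * t j with hF
  have hneg : F (-t) = -F t := by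
    simp [hF, Finset.sum_neg_distrib]
  rcases le_total 0 (F t) with h | h
  · exact Real.sSup_nonneg' ⟨F t, ⟨t, ht, rfl⟩, h⟩
  · exact Real.sSup_nonneg' ⟨F (-t), ⟨-t, ht', rfl⟩, by rw [hneg]; linarith⟩

end Chaos

/-! ### Partitions into singletons -/

section Singles

variable {n m d : ℕ}

/-- The singleton block of a coordinate other than the first. -/
def sgl (k : PIdx d) : Finset (Fin (d + 1)) := {k.1}

lemma sgl_injective : Function.Injective (sgl (d := d)) := by
  intro k l h
  exact Subtype.ext (Finset.singleton_injective h)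

/-- The singleton blocks of the coordinates outside `I`. -/
noncomputable def outBlocks (I : Finset (PIdx d)) : Finset (Finset (Fin (d + 1))) :=
  (Finset.univ \ I).image sgl

/-- The singleton blocks of the first coordinate and of the coordinates in `I`. -/
noncomputable def inBlocks (I : Finset (PIdx d)) : Finset (Finset (Fin (d + 1))) :=
  insert {0} (I.image sgl)

/-- The block made of the first coordinate and of the coordinates in `I`. -/
noncomputable def bigBlock (I : Finset (PIdx d)) : Finset (Fin (d + 1)) :=
  insert 0 (I.image Subtype.val)

lemma zero_notMem_sgl (k : PIdx d) : (0 : Fin (d + 1)) ∉ sgl k := by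
  simpa [sgl] using fun h => k.2 h.symm

lemma zero_notMem_of_mem_outBlocks {I : Finset (PIdx d)} {J : Finset (Fin (d + 1))}
    (hJ : J ∈ outBlocks I) : (0 : Fin (d + 1)) ∉ J := by
  obtain ⟨k, -, rfl⟩ := Finset.mem_image.1 hJ
  exact zero_notMem_sgl k

lemma card_PIdx : Fintype.card (PIdx d) = d := by
  rw [Fintype.card_subtype_compl]
  simp

lemma card_outBlocks (I : Finset (PIdx d)) : (outBlocks I).card + I.card = d := by
  rw [outBlocks, Finset.card_image_of_injective _ sgl_injective,
    Finset.card_sdiff_add_card_eq_card (Finset.subset_univ I), Finset.card_univ, card_PIdx]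

lemma card_insert_outBlocks (I : Finset (PIdx d)) :
    (insert (bigBlock I) (outBlocks I)).card + I.card = d + 1 := by
  rw [Finset.card_insert_of_notMem, add_right_comm, card_outBlocks]
  intro h
  exact zero_notMem_of_mem_outBlocks h (by simp [bigBlock])

lemma isPartitionPair_out_in (I : Finset (PIdx d)) :
    IsPartitionPair Finset.univ (outBlocks I) (inBlocks I) := by
  have hmem : ∀ J ∈ outBlocks I ∪ inBlocks I, ∃ k, J = {k} := by
    intro J hJ
    simp only [outBlocks, inBlocks, Finset.mem_union, Finset.mem_image, Finset.mem_insert,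
      sgl] at hJ
    rcases hJ with ⟨k, -, rfl⟩ | rfl | ⟨k, -, rfl⟩ <;> exact ⟨_, rfl⟩
  refine ⟨?_, ?_, ?_, ?_⟩
  · rw [Finset.disjoint_left]
    intro J hJ hJ'
    have h0 := zero_notMem_of_mem_outBlocks hJ
    rcases Finset.mem_insert.1 hJ' with rfl | h
    · simp at h0
    · obtain ⟨k, hk, rfl⟩ := Finset.mem_image.1 hJ
      obtain ⟨l, hl, hlk⟩ := Finset.mem_image.1 h
      rw [sgl_injective hlk] at hl
      exact (Finset.mem_sdiff.1 hk).2 hl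
  · intro J hJ
    obtain ⟨k, rfl⟩ := hmem J hJ
    exact Finset.singleton_nonempty k
  · intro J hJ J' hJ' hne
    obtain ⟨k, rfl⟩ := hmem J hJ
    obtain ⟨l, rfl⟩ := hmem J' hJ'
    rw [Finset.disjoint_singleton]
    rintro rfl
    exact hne rfl
  · ext k
    simp only [Finset.mem_sup, id, Finset.mem_univ, iff_true]
    refine ⟨{k}, ?_, Finset.mem_singleton_self k⟩
    rw [Finset.mem_union]
    by_cases hk : k = 0
    · right
      subst hk
      exact Finset.mem_insert_self _ _
    · by_cases hI : (⟨k, hk⟩ : PIdx d) ∈ I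
      · right
        exact Finset.mem_insert_of_mem (Finset.mem_image.2 ⟨⟨k, hk⟩, hI, rfl⟩)
      · left
        exact Finset.mem_image.2 ⟨⟨k, hk⟩, by simp [hI], rfl⟩

lemma isPartitionPair_big (I : Finset (PIdx d)) :
    IsPartitionPair Finset.univ (insert (bigBlock I) (outBlocks I)) ∅ := by
  have hdis : ∀ J ∈ outBlocks I, Disjoint (bigBlock I) J := by
    intro J hJ
    obtain ⟨k, hk, rfl⟩ := Finset.mem_image.1 hJ
    rw [sgl, Finset.disjoint_singleton_right]
    intro h
    rcases Finset.mem_insert.1 h with h | h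
    · exact k.2 h
    · obtain ⟨l, hl, hlk⟩ := Finset.mem_image.1 h
      rw [Subtype.ext hlk] at hl
      exact (Finset.mem_sdiff.1 hk).2 hl
  refine ⟨Finset.disjoint_empty_right _, ?_, ?_, ?_⟩
  · intro J hJ
    rw [Finset.union_empty] at hJ
    rcases Finset.mem_insert.1 hJ with rfl | h
    · exact ⟨0, Finset.mem_insert_self _ _⟩
    · obtain ⟨k, -, rfl⟩ := Finset.mem_image.1 h
      exact Finset.singleton_nonempty _
  · intro J hJ J' hJ' hne
    rw [Finset.union_empty] at hJ hJ'
    rcases Finset.mem_insert.1 hJ with rfl | h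
    · rcases Finset.mem_insert.1 hJ' with rfl | h'
      · exact absurd rfl hne
      · exact hdis _ h'
    · rcases Finset.mem_insert.1 hJ' with rfl | h'
      · exact (hdis _ h).symm
      · obtain ⟨k, -, rfl⟩ := Finset.mem_image.1 h
        obtain ⟨l, -, rfl⟩ := Finset.mem_image.1 h'
        rw [sgl, sgl, Finset.disjoint_singleton]
        intro e
        exact hne (by rw [sgl, sgl, e])
  · ext k
    simp only [Finset.union_empty, Finset.mem_sup, id, Finset.mem_univ, iff_true]
    by_cases hk : k = 0
    · exact ⟨_, Finset.mem_insert_self _ _, by simp [bigBlock, hk]⟩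
    · by_cases hI : (⟨k, hk⟩ : PIdx d) ∈ I
      · exact ⟨_, Finset.mem_insert_self _ _,
          Finset.mem_insert_of_mem (Finset.mem_image.2 ⟨⟨k, hk⟩, hI, rfl⟩)⟩
      · exact ⟨{k}, Finset.mem_insert_of_mem (Finset.mem_image.2 ⟨⟨k, hk⟩, by simp [hI], rfl⟩),
          Finset.mem_singleton_self k⟩

/-- The arrays on blocks `J ⊆ [d+1]` which on the singleton `{k}` coincide with the `k`-th block of
`x`. -/
noncomputable def blockX (x : PIdx d × Fin n → ℝ) (J : Finset (Fin (d + 1)))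
    (v : {l // l ∈ J} → Fin n) : ℝ :=
  ∏ l : {l // l ∈ J}, if h : l.1 ≠ 0 then x (⟨l.1, h⟩, v l) else 1

lemma blockX_sgl (x : PIdx d × Fin n → ℝ) (k : PIdx d) (v : {l // l ∈ sgl k} → Fin n) :
    blockX x (sgl k) v = x (k, v ⟨k.1, Finset.mem_singleton_self _⟩) := by
  unfold blockX
  rw [Finset.prod_eq_single (⟨k.1, Finset.mem_singleton_self _⟩ : {l // l ∈ sgl k})]
  · rw [dif_pos k.2]
  · rintro ⟨l, hl⟩ - hne
    exact absurd (Subtype.ext (Finset.mem_singleton.1 hl)) hne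
  · simp

lemma sum_blockX_sgl (x : PIdx d × Fin n → ℝ) (k : PIdx d) :
    ∑ v : {l // l ∈ sgl k} → Fin n, blockX x (sgl k) v ^ 2 ≤ ∑ j, x (k, j) ^ 2 := by
  simp only [blockX_sgl]
  set ev : ({l // l ∈ sgl k} → Fin n) → Fin n :=
    fun v => v ⟨k.1, Finset.mem_singleton_self _⟩ with hev
  have hinj : Function.Injective ev := by
    intro v v' h
    funext l
    have : l = ⟨k.1, Finset.mem_singleton_self _⟩ :=
      Subtype.ext (Finset.mem_singleton.1 l.2)
    rw [this]
    exact h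
  rw [← Finset.sum_image (s := Finset.univ) (g := ev) (f := fun j => x (k, j) ^ 2) hinj.injOn]
  exact Finset.sum_le_sum_of_subset_of_nonneg (Finset.subset_univ _) fun _ _ _ => sq_nonneg _

lemma prod_outBlocks_blockX (x : PIdx d × Fin n → ℝ) (I : Finset (PIdx d)) (i1 : Fin n)
    (i' : PIdx d → Fin n) :
    ∏ J ∈ outBlocks I, blockX x J (fun l => ext0 i1 i' l.1) =
      ∏ k ∈ Finset.univ \ I, x (k, i' k) := by
  rw [outBlocks, Finset.prod_image sgl_injective.injOn]
  exact Finset.prod_congr rfl fun k _ => by rw [blockX_sgl, ext0_val]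

/-- The coefficients of the multilinear forms attached to `A` and to the points of `T`. -/
noncomputable def coefA (A : (Fin (d + 1) → Fin n) → Fin m → ℝ) (T : Set (Fin m → ℝ)) (t : T)
    (i1 : Fin n) (i' : PIdx d → Fin n) : ℝ :=
  ∑ j, A (ext0 i1 i') j * t.1 j

end Singles

/-! ### Comparison with the norms `‖A‖_{P'|P}` -/

section Compare

variable {n m d : ℕ} {A : (Fin (d + 1) → Fin n) → Fin m → ℝ} {T : Set (Fin m → ℝ)} {cT : ℝ}

/-- The Gaussian index attached to the coordinate `i` of the singleton block `{k}`. -/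
def gIdx (k : Fin (d + 1)) (i : Fin n) : GIdx (d + 1) n := ⟨{k}, fun _ => i⟩

lemma gIdx_inj {k k' : Fin (d + 1)} {i i' : Fin n} (h : gIdx k i = gIdx k' i') :
    k = k' ∧ i = i' := by
  unfold gIdx at h
  have h1 : k = k' := Finset.singleton_injective (Sigma.mk.inj_iff.1 h).1
  subst h1
  refine ⟨rfl, ?_⟩
  exact congrFun (eq_of_heq (Sigma.mk.inj_iff.1 h).2) ⟨k, Finset.mem_singleton_self k⟩

lemma gIdx_eq (k : Fin (d + 1)) (i : Fin (d + 1) → Fin n) :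
    (⟨{k}, fun l => i l.1⟩ : GIdx (d + 1) n) = gIdx k (i k) := by
  unfold gIdx
  congr 1
  funext l
  rw [Finset.mem_singleton.1 l.2]

end Compare

section Transfer

variable {K τ : Type*} [Fintype K] {n : ℕ} {b : τ → Fin n → (K → Fin n) → ℝ} {cb : ℝ}

lemma measurable_iSup_mixV (hb : ∀ t i i', |b t i i'| ≤ cb) (I : Finset K)
    (x : K × Fin n → ℝ) :
    Measurable (fun q : (K × Fin n → ℝ) × (Fin n → ℝ) =>
      ⨆ t : τ, ∑ i, q.2 i * polyV b (mixV I x q.1) t i) := by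
  have h0 := measurable_iSup_joint (V := polyV b) continuous_polyV (abs_polyV_le hb)
  have h2 : Measurable fun q : (K × Fin n → ℝ) × (Fin n → ℝ) => (mixV I x q.1, q.2) :=
    ((measurable_mixV I x).comp measurable_fst).prodMk measurable_snd
  have h3 := h0.comp h2
  simp only [Function.comp_def] at h3
  exact h3

lemma integrable_iSup_mixV [Nonempty τ] (hb : ∀ t i i', |b t i i'| ≤ cb) (I : Finset K)
    (x : K × Fin n → ℝ) :
    Integrable (fun q : (K × Fin n → ℝ) × (Fin n → ℝ) =>
      ⨆ t : τ, ∑ i, q.2 i * polyV b (mixV I x q.1) t i)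
      ((_root_.stdGaussian (K × Fin n)).prod (_root_.stdGaussian (Fin n))) := by
  have h1 := (((integrable_exp_sum_abs (K × Fin n) 1).const_mul
      (Real.exp (∑ q, |x q|))).const_mul
      (Fintype.card (K → Fin n) * |cb|)).mul_prod
        (integrable_finsetSum Finset.univ fun i _ => (integrable_coord (ι := Fin n) i).abs)
  refine h1.mono' (measurable_iSup_mixV hb I x).aestronglyMeasurable (ae_of_all _ fun q => ?_)
  rw [Real.norm_eq_abs]
  refine (abs_iSup_linear_le (abs_polyV_le hb (mixV I x q.1)) q.2).trans ?_
  have h0 : 0 ≤ ∑ i, |q.2 i| := Finset.sum_nonneg fun i _ => abs_nonneg _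
  rw [← Real.exp_add]
  gcongr
  · exact le_abs_self cb
  · exact sum_abs_mixV_le I x q.1

/-- The Gaussian arrays in a smoothed conditional supremum may be read off from any larger Gaussian
array. -/
lemma integral_supMean_mixV_eq [Nonempty τ] (hb : ∀ t i i', |b t i i'| ≤ cb) (I : Finset K)
    (x : K × Fin n → ℝ) {κ : Type*} [Fintype κ] {e : K × Fin n → κ} {e' : Fin n → κ}
    (he : Function.Injective (Sum.elim e e')) :
    ∫ h, supMean (polyV b) (mixV I x h) ∂_root_.stdGaussian (K × Fin n) =
      ∫ ω : κ → ℝ, ⨆ t : τ, ∑ i, ω (e' i) * polyV b (mixV I x fun q => ω (e q)) t i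
        ∂_root_.stdGaussian κ := by
  have hmp := measurePreserving_pair_stdGaussian he
  have h1 := integral_prod _ (integrable_iSup_mixV hb I x)
  rw [← hmp.map_eq, integral_map hmp.measurable.aemeasurable
    (measurable_iSup_mixV hb I x).aestronglyMeasurable] at h1
  exact h1.symm

end Transfer

section Compare

variable {n m d : ℕ} {A : (Fin (d + 1) → Fin n) → Fin m → ℝ} {T : Set (Fin m → ℝ)} {cT : ℝ}

lemma gIdx_elim_injective : Function.Injective (Sum.elim
    (fun q : PIdx d × Fin n => (gIdx q.1.1 q.2 : GIdx (d + 1) n)) (fun i => gIdx 0 i)) := by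
  rintro (⟨k, i⟩ | i) (⟨k', i'⟩ | i') h
  · simp only [Sum.elim_inl] at h
    obtain ⟨h1, h2⟩ := gIdx_inj h
    rw [Subtype.ext h1, h2]
  · simp only [Sum.elim_inl, Sum.elim_inr] at h
    exact absurd (gIdx_inj h).1 k.2
  · simp only [Sum.elim_inl, Sum.elim_inr] at h
    exact absurd (gIdx_inj h).1.symm k'.2
  · simp only [Sum.elim_inr] at h
    rw [(gIdx_inj h).2]

lemma sum_polyV_mixV_eq (I : Finset (PIdx d)) (x : PIdx d × Fin n → ℝ)
    (ω : GIdx (d + 1) n → ℝ) (t : T) :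
    ∑ i, ω (gIdx 0 i) * polyV (coefA A T) (mixV I x fun q => ω (gIdx q.1.1 q.2)) t i =
      ∑ i : Fin (d + 1) → Fin n, ∑ j : Fin m,
        (∏ J ∈ outBlocks I, blockX x J fun l => i l.1) *
          (∏ J ∈ inBlocks I, ω ⟨J, fun l => i l.1⟩) * A i j * t.1 j := by
  have h0 : ({0} : Finset (Fin (d + 1))) ∉ I.image sgl := by
    intro h
    obtain ⟨k, -, hk⟩ := Finset.mem_image.1 h
    exact zero_notMem_sgl k (hk ▸ Finset.mem_singleton_self _)
  rw [sum_ext0]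
  refine Finset.sum_congr rfl fun i1 _ => ?_
  unfold polyV
  rw [Finset.mul_sum]
  -- the two enumerations of the multi-indices use different decidability instances
  refine Finset.sum_congr (by ext; simp) fun i' _ => ?_
  rw [prod_mixV, coefA, Finset.sum_mul, Finset.mul_sum]
  refine Finset.sum_congr rfl fun j _ => ?_
  rw [prod_outBlocks_blockX, inBlocks, Finset.prod_insert h0,
    Finset.prod_image sgl_injective.injOn]
  simp only [sgl, gIdx_eq, ext0_zero, ext0_val]
  ring_nf
  congr!

/-- A decoupled chaos in the first block and the blocks of `I`, contracted with unit vectors in the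
other blocks, is controlled by the norm with singleton blocks. -/
lemma integral_supMean_mixV_le (hne : T.Nonempty) (hT : ∀ t ∈ T, ∀ j, |t j| ≤ cT) (hc : 0 ≤ cT)
    {cb : ℝ} (hb : ∀ t i i', |coefA A T t i i'| ≤ cb)
    (I : Finset (PIdx d)) (x : PIdx d × Fin n → ℝ) (hx : ∀ k, ∑ j, x (k, j) ^ 2 ≤ 1) :
    ∫ h, supMean (polyV (coefA A T)) (mixV I x h) ∂_root_.stdGaussian (PIdx d × Fin n) ≤
      chaosNormT A T (inBlocks I) (outBlocks I) := by
  have : Nonempty T := hne.to_subtype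
  have hX : ∀ J ∈ outBlocks I, ∑ v : {l // l ∈ J} → Fin n, blockX x J v ^ 2 ≤ 1 := by
    intro J hJ
    obtain ⟨k, -, rfl⟩ := Finset.mem_image.1 hJ
    exact (sum_blockX_sgl x k).trans (hx k)
  refine le_trans (le_of_eq ?_) (le_chaosNormT (A := A) hT hc (P' := inBlocks I) (blockX x) hX)
  rw [integral_supMean_mixV_eq hb I x gIdx_elim_injective]
  refine integral_congr_ae (ae_of_all _ fun ω => ?_)
  simp only [sum_polyV_mixV_eq]
  rw [iSup]
  congr 1
  ext s
  constructor
  · rintro ⟨t, rfl⟩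
    exact ⟨t.1, t.2, rfl⟩
  · rintro ⟨t, ht, rfl⟩
    exact ⟨⟨t, ht⟩, rfl⟩

end Compare

section Contract

variable {K τ : Type*} [Fintype K] {n : ℕ} {b : τ → Fin n → (K → Fin n) → ℝ}

/-- The partial contraction of `b t i` with `x` in the coordinates outside `I`. -/
noncomputable def partC (b : τ → Fin n → (K → Fin n) → ℝ) (x : K × Fin n → ℝ) (t : τ)
    (I : Finset K) (i : Fin n) (u : {k // k ∈ I} → Fin n) : ℝ :=
  ∑ i' : K → Fin n, if (fun k : {k // k ∈ I} => i' k) = u then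
    b t i i' * ∏ k ∈ Finset.univ \ I, x (k, i' k) else 0

lemma partQ_eq_sum_partC (x : K × Fin n → ℝ) (t : τ) (I : Finset K) (i : Fin n)
    [Fintype ({k // k ∈ I} → Fin n)] :
    partQ b x t I i = ∑ u, partC b x t I i u ^ 2 := by
  unfold partQ partC
  congr!

lemma partQ_nonneg (x : K × Fin n → ℝ) (t : τ) (I : Finset K) (i : Fin n) :
    0 ≤ partQ b x t I i := Finset.sum_nonneg fun _ _ => sq_nonneg _

lemma sum_mul_partC (x : K × Fin n → ℝ) (t : τ) (I : Finset K) (i : Fin n)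
    (φ : ({k // k ∈ I} → Fin n) → ℝ) [Fintype ({k // k ∈ I} → Fin n)] :
    ∑ u, φ u * partC b x t I i u =
      ∑ i' : K → Fin n, φ (fun k => i' k.1) * (b t i i' * ∏ k ∈ Finset.univ \ I, x (k, i' k)) := by
  unfold partC
  simp only [Finset.mul_sum]
  rw [Finset.sum_comm]
  refine Finset.sum_congr rfl fun i' _ => ?_
  simp

end Contract

section Compare

variable {n m d : ℕ} {A : (Fin (d + 1) → Fin n) → Fin m → ℝ} {T : Set (Fin m → ℝ)} {cT : ℝ}

lemma zero_mem_bigBlock (I : Finset (PIdx d)) : (0 : Fin (d + 1)) ∈ bigBlock I :=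
  Finset.mem_insert_self _ _

lemma val_mem_bigBlock {I : Finset (PIdx d)} {k : PIdx d} (hk : k ∈ I) : k.1 ∈ bigBlock I :=
  Finset.mem_insert_of_mem (Finset.mem_image_of_mem _ hk)

/-- The arrays on blocks given by `c` on the block of the first coordinate and `I`, and by `x` on
the singletons of the other coordinates. -/
noncomputable def bigX (x : PIdx d × Fin n → ℝ) (I : Finset (PIdx d))
    (c : Fin n → ({k // k ∈ I} → Fin n) → ℝ) (J : Finset (Fin (d + 1)))
    (v : {l // l ∈ J} → Fin n) : ℝ :=
  if h : bigBlock I ⊆ J then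
    c (v ⟨0, h (zero_mem_bigBlock I)⟩) (fun k => v ⟨k.1.1, h (val_mem_bigBlock k.2)⟩)
  else blockX x J v

lemma bigX_bigBlock (x : PIdx d × Fin n → ℝ) (I : Finset (PIdx d))
    (c : Fin n → ({k // k ∈ I} → Fin n) → ℝ) (v : {l // l ∈ bigBlock I} → Fin n) :
    bigX x I c (bigBlock I) v =
      c (v ⟨0, zero_mem_bigBlock I⟩) (fun k => v ⟨k.1.1, val_mem_bigBlock k.2⟩) := by
  rw [bigX, dif_pos (Finset.Subset.refl _)]

lemma bigX_of_mem_outBlocks (x : PIdx d × Fin n → ℝ) {I : Finset (PIdx d)}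
    (c : Fin n → ({k // k ∈ I} → Fin n) → ℝ) {J : Finset (Fin (d + 1))} (hJ : J ∈ outBlocks I)
    (v : {l // l ∈ J} → Fin n) : bigX x I c J v = blockX x J v := by
  rw [bigX, dif_neg]
  exact fun h => zero_notMem_of_mem_outBlocks hJ (h (zero_mem_bigBlock I))

lemma sum_bigX_bigBlock (x : PIdx d × Fin n → ℝ) (I : Finset (PIdx d))
    (c : Fin n → ({k // k ∈ I} → Fin n) → ℝ) :
    ∑ v : {l // l ∈ bigBlock I} → Fin n, bigX x I c (bigBlock I) v ^ 2 ≤ ∑ i, ∑ u, c i u ^ 2 := by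
  simp only [bigX_bigBlock]
  rw [← Fintype.sum_prod_type' fun i u => c i u ^ 2]
  set ev : ({l // l ∈ bigBlock I} → Fin n) → Fin n × ({k // k ∈ I} → Fin n) :=
    fun v => (v ⟨0, zero_mem_bigBlock I⟩, fun k => v ⟨k.1.1, val_mem_bigBlock k.2⟩) with hev
  have hinj : Function.Injective ev := by
    intro v v' h
    obtain ⟨h0, h1⟩ := Prod.ext_iff.1 h
    funext l
    obtain ⟨l, hl⟩ := l
    rcases Finset.mem_insert.1 hl with rfl | hl'
    · exact h0
    · obtain ⟨k, hk, rfl⟩ := Finset.mem_image.1 hl'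
      exact congrFun h1 ⟨k, hk⟩
  rw [← Finset.sum_image (s := Finset.univ) (g := ev) (f := fun q => c q.1 q.2 ^ 2) hinj.injOn]
  exact Finset.sum_le_sum_of_subset_of_nonneg (Finset.subset_univ _) fun _ _ _ => sq_nonneg _

lemma sum_bigX_eq (x : PIdx d × Fin n → ℝ) (I : Finset (PIdx d))
    (c : Fin n → ({k // k ∈ I} → Fin n) → ℝ) (t : T) :
    ∑ i : Fin (d + 1) → Fin n, ∑ j : Fin m,
        (∏ J ∈ insert (bigBlock I) (outBlocks I), bigX x I c J fun l => i l.1) * A i j * t.1 j =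
      ∑ i, ∑ u, c i u * partC (coefA A T) x t I i u := by
  rw [sum_ext0]
  refine Finset.sum_congr rfl fun i1 _ => ?_
  have h0 : bigBlock I ∉ outBlocks I := fun h =>
    zero_notMem_of_mem_outBlocks h (zero_mem_bigBlock I)
  rw [sum_mul_partC]
  -- the two enumerations of the multi-indices use different decidability instances
  refine Finset.sum_congr (by ext; simp) fun i' _ => ?_
  rw [Finset.prod_insert h0, bigX_bigBlock,
    Finset.prod_congr rfl fun J hJ => bigX_of_mem_outBlocks x c hJ _, prod_outBlocks_blockX,
    coefA, Finset.sum_mul, Finset.mul_sum]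
  refine Finset.sum_congr rfl fun j _ => ?_
  simp only [ext0_zero, ext0_val]
  have e : ∀ a r s p q : ℝ, p = q → a * p * r * s = a * (r * s * q) := by
    rintro a r s p q rfl
    ring
  exact e _ _ _ _ _ (by congr!)

/-- The Hilbert–Schmidt norm of a partial contraction of `A` with unit vectors and with a point of
`T` is controlled by the deterministic norm with one large block. -/
lemma sqrt_sum_partQ_le (hne : T.Nonempty) (hsym : T = -T) (hT : ∀ t ∈ T, ∀ j, |t j| ≤ cT)
    (hc : 0 ≤ cT) (I : Finset (PIdx d)) (x : PIdx d × Fin n → ℝ)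
    (hx : ∀ k, ∑ j, x (k, j) ^ 2 ≤ 1) (t : T) :
    √(∑ i, partQ (coefA A T) x t I i) ≤
      chaosNormT A T ∅ (insert (bigBlock I) (outBlocks I)) := by
  set Q := ∑ i, partQ (coefA A T) x t I i with hQ
  have hQ0 : 0 ≤ Q := Finset.sum_nonneg fun i _ => partQ_nonneg x t I i
  rcases hQ0.eq_or_lt with h0 | hpos
  · rw [← h0, Real.sqrt_zero]
    exact chaosNormT_nonneg hne hsym _ _
  have hq : 0 < √Q := Real.sqrt_pos.2 hpos
  have hqq : √Q ^ 2 = Q := Real.sq_sqrt hQ0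
  set c : Fin n → ({k // k ∈ I} → Fin n) → ℝ :=
    fun i u => partC (coefA A T) x t I i u / √Q with hcdef
  have hc2 : ∑ i, ∑ u, c i u ^ 2 = 1 := by
    simp only [hcdef, div_pow, hqq, ← Finset.sum_div, ← partQ_eq_sum_partC]
    exact div_self hpos.ne'
  have hX : ∀ J ∈ insert (bigBlock I) (outBlocks I),
      ∑ v : {l // l ∈ J} → Fin n, bigX x I c J v ^ 2 ≤ 1 := by
    intro J hJ
    rcases Finset.mem_insert.1 hJ with rfl | h
    · exact (sum_bigX_bigBlock x I c).trans hc2.le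
    · simp only [bigX_of_mem_outBlocks x c h]
      obtain ⟨k, -, rfl⟩ := Finset.mem_image.1 h
      exact (sum_blockX_sgl x k).trans (hx k)
  refine le_trans ?_ (le_chaosNormT (A := A) hT hc (P' := ∅) (bigX x I c) hX)
  simp only [Finset.prod_empty, mul_one, integral_const, probReal_univ, one_smul]
  have hval : √Q = ∑ i, ∑ u, c i u * partC (coefA A T) x t I i u := by
    have : ∀ i u, c i u * partC (coefA A T) x t I i u =
        partC (coefA A T) x t I i u ^ 2 / √Q := fun i u => by
      simp only [hcdef]; ring
    simp only [this, ← Finset.sum_div, ← partQ_eq_sum_partC]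
    rw [← hQ, Real.div_sqrt]
  rw [hval, ← sum_bigX_eq]
  refine le_csSup ⟨∑ i : Fin (d + 1) → Fin n, ∑ j : Fin m, |A i j| * cT, ?_⟩ ⟨t.1, t.2, rfl⟩
  rintro _ ⟨s, hs, rfl⟩
  refine Finset.sum_le_sum fun i _ => Finset.sum_le_sum fun j _ => ?_
  refine (le_abs_self _).trans ?_
  rw [abs_mul, abs_mul]
  calc _ ≤ 1 * |A i j| * cT := by
        gcongr
        · exact abs_prod_x_le hX i
        · exact hT s hs j
    _ = _ := by ring

end Compare

/-! ### Assembling the estimate -/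

section Assembly

variable {n m d : ℕ} {A : (Fin (d + 1) → Fin n) → Fin m → ℝ} {T : Set (Fin m → ℝ)} {cT : ℝ}

/-- The vectors `x^2,…,x^d` of a point, as one array. -/
def flat (z : Pt n m d) : PIdx d × Fin n → ℝ := fun q => z.1 q.1 q.2

lemma abs_coefA_le (hT : ∀ t ∈ T, ∀ j, |t j| ≤ cT) (hc : 0 ≤ cT) (t : T) (i1 : Fin n)
    (i' : PIdx d → Fin n) :
    |coefA A T t i1 i'| ≤ ∑ i : Fin (d + 1) → Fin n, ∑ j, |A i j| * cT := by
  refine (Finset.abs_sum_le_sum_abs _ _).trans ?_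
  refine le_trans (Finset.sum_le_sum fun j _ => ?_) (Finset.single_le_sum
    (f := fun i : Fin (d + 1) → Fin n => ∑ j, |A i j| * cT)
    (fun i _ => Finset.sum_nonneg fun j _ => mul_nonneg (abs_nonneg _) hc)
    (Finset.mem_univ (ext0 i1 i')))
  rw [abs_mul]
  exact mul_le_mul_of_nonneg_left (hT _ t.2 j) (abs_nonneg _)

lemma polyV_flat (z : Pt n m d) (hz : z.2 ∈ T) (i1 : Fin n) :
    polyV (coefA A T) (flat z) ⟨z.2, hz⟩ i1 =
      ∑ i' : PIdx d → Fin n, ∑ j, A (ext0 i1 i') j * ((∏ k, z.1 k (i' k)) * z.2 j) := by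
  unfold polyV
  refine Finset.sum_congr (by ext; simp) fun i' _ => ?_
  rw [coefA, Finset.sum_mul]
  refine Finset.sum_congr rfl fun j _ => ?_
  simp only [flat]
  ring

lemma rhoA_eq (z w : Pt n m d) (hz : z.2 ∈ T) (hw : w.2 ∈ T) :
    rhoA A z w = √(∑ i, (polyV (coefA A T) (flat w) ⟨w.2, hw⟩ i -
      polyV (coefA A T) (flat z) ⟨z.2, hz⟩ i) ^ 2) := by
  unfold rhoA
  simp only [polyV_flat, ← Finset.sum_sub_distrib, mul_sub]

lemma sum_mul_polyV_flat (z : Pt n m d) (hz : z.2 ∈ T) (g : Fin n → ℝ) :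
    ∑ i : Fin (d + 1) → Fin n, ∑ j : Fin m,
        g (i 0) * (∏ k : PIdx d, z.1 k (i k.1)) * A i j * z.2 j =
      ∑ i, g i * polyV (coefA A T) (flat z) ⟨z.2, hz⟩ i := by
  rw [sum_ext0]
  refine Finset.sum_congr rfl fun i1 _ => ?_
  rw [polyV_flat, Finset.mul_sum]
  refine Finset.sum_congr rfl fun i' _ => ?_
  rw [Finset.mul_sum]
  refine Finset.sum_congr rfl fun j _ => ?_
  simp only [ext0_zero, ext0_val]
  ring

lemma bddAbove_rhoA (hT : ∀ t ∈ T, ∀ j, |t j| ≤ cT) (hc : 0 ≤ cT) {U : Set (Pt n m d)}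
    (hU : U ⊆ ballSet n m d T) : BddAbove {r : ℝ | ∃ z ∈ U, ∃ w ∈ U, r = rhoA A z w} := by
  set cb := ∑ i : Fin (d + 1) → Fin n, ∑ j, |A i j| * cT with hcb
  have hcb0 : 0 ≤ cb := Finset.sum_nonneg fun i _ => Finset.sum_nonneg fun j _ =>
    mul_nonneg (abs_nonneg _) hc
  obtain ⟨B, hB⟩ : ∃ B, ∀ z ∈ U, ∀ (hz : z.2 ∈ T) (i : Fin n),
      |polyV (coefA A T) (flat z) ⟨z.2, hz⟩ i| ≤ B := by
    refine ⟨_, fun z hzU hz i => (abs_polyV_le (abs_coefA_le hT hc) (flat z) ⟨z.2, hz⟩ i).trans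
      (mul_le_mul_of_nonneg_left (Real.exp_le_exp.2
        (Finset.sum_le_sum (g := fun _ => 1) fun q _ => ?_)) (by positivity))⟩
    rw [← sq_le_one_iff_abs_le_one]
    exact (Finset.single_le_sum (f := fun j => z.1 q.1 j ^ 2) (fun _ _ => sq_nonneg _)
      (Finset.mem_univ q.2)).trans ((hU hzU).1 q.1)
  refine ⟨√(∑ _i : Fin n, (B + B) ^ 2), ?_⟩
  rintro _ ⟨z, hz, w, hw, rfl⟩
  rw [rhoA_eq z w (hU hz).2 (hU hw).2]
  refine Real.sqrt_le_sqrt (Finset.sum_le_sum fun i _ => ?_)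
  refine sq_le_sq.2 (((abs_sub _ _).trans
    (add_le_add (hB w hw _ i) (hB z hz _ i))).trans (le_abs_self _))

/-- The weighted sum of the quantities `s_k(A)`. -/
noncomputable def sTotal (A : (Fin (d + 1) → Fin n) → Fin m → ℝ) (T : Set (Fin m → ℝ))
    (p : ℝ) : ℝ :=
  ∑ k ∈ Finset.range (d + 1), p ^ (((k : ℝ) + 1 - ((d : ℝ) + 1)) / 2) * sNorm A T k

lemma sNorm_nonneg (hne : T.Nonempty) (hsym : T = -T) (k : ℕ) : 0 ≤ sNorm A T k :=
  Finset.sum_nonneg fun _ _ => chaosNormT_nonneg hne hsym _ _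

lemma sTotal_nonneg (hne : T.Nonempty) (hsym : T = -T) {p : ℝ} (hp : 0 ≤ p) :
    0 ≤ sTotal A T p :=
  Finset.sum_nonneg fun _ _ => mul_nonneg (Real.rpow_nonneg hp _) (sNorm_nonneg hne hsym _)

lemma le_sTotal (hne : T.Nonempty) (hsym : T = -T) {p : ℝ} (hp : 0 ≤ p)
    {P P' : Finset (Finset (Fin (d + 1)))} (hP : IsPartitionPair Finset.univ P P')
    (hk : P.card ≤ d) :
    p ^ (((P.card : ℝ) - d) / 2) * chaosNormT A T P' P ≤ sTotal A T p := by
  have h1 : chaosNormT A T P' P ≤ sNorm A T P.card :=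
    Finset.single_le_sum (f := fun PP : Finset (Finset (Fin (d + 1))) ×
      Finset (Finset (Fin (d + 1))) => chaosNormT A T PP.2 PP.1)
      (fun _ _ => chaosNormT_nonneg hne hsym _ _)
      (Finset.mem_filter.2 ⟨Finset.mem_univ (P, P'), hP, rfl⟩)
  have h2 : p ^ (((P.card : ℝ) + 1 - ((d : ℝ) + 1)) / 2) * sNorm A T P.card ≤ sTotal A T p :=
    Finset.single_le_sum (f := fun k : ℕ =>
      p ^ (((k : ℝ) + 1 - ((d : ℝ) + 1)) / 2) * sNorm A T k)
      (fun _ _ => mul_nonneg (Real.rpow_nonneg hp _) (sNorm_nonneg hne hsym _))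
      (Finset.mem_range.2 (Nat.lt_succ_of_le hk))
  rw [add_sub_add_right_eq_sub] at h2
  exact (mul_le_mul_of_nonneg_left h1 (Real.rpow_nonneg hp _)).trans h2

lemma inv_sqrt_pow {p : ℝ} (hp : 0 < p) (k : ℕ) : (1 / √p) ^ k = p ^ (-(k : ℝ) / 2) := by
  rw [one_div, Real.sqrt_eq_rpow, ← Real.rpow_neg hp.le, ← Real.rpow_natCast,
    ← Real.rpow_mul hp.le]
  congr 1
  ring

lemma pow_mul_in_le (hne : T.Nonempty) (hsym : T = -T) {p : ℝ} (hp : 0 < p)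
    (I : Finset (PIdx d)) :
    (1 / √p) ^ I.card * chaosNormT A T (inBlocks I) (outBlocks I) ≤ sTotal A T p := by
  have hcard := card_outBlocks I
  have h := le_sTotal (A := A) hne hsym hp.le (isPartitionPair_out_in I) (by omega)
  rw [inv_sqrt_pow hp]
  convert h using 3
  have : ((outBlocks I).card : ℝ) + I.card = d := by exact_mod_cast hcard
  linarith

lemma pow_mul_big_le (hne : T.Nonempty) (hsym : T = -T) {p : ℝ} (hp : 0 < p)
    {I : Finset (PIdx d)} (hI : I ≠ ∅) :
    √p * ((1 / √p) ^ I.card * chaosNormT A T ∅ (insert (bigBlock I) (outBlocks I))) ≤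
      sTotal A T p := by
  have hcard := card_insert_outBlocks I
  have hpos : 0 < I.card := Finset.card_pos.2 (Finset.nonempty_iff_ne_empty.2 hI)
  have h := le_sTotal (A := A) hne hsym hp.le (isPartitionPair_big I) (by omega)
  rw [inv_sqrt_pow hp, ← mul_assoc, Real.sqrt_eq_rpow, ← Real.rpow_add hp]
  convert h using 3
  have : ((insert (bigBlock I) (outBlocks I)).card : ℝ) + I.card = d + 1 := by exact_mod_cast hcard
  linarith

/-- The bound on `F_A(U)`, with a small error that makes the radius of `U` positive. -/
lemma FA_le_of_pos (hne : T.Nonempty) (hsym : T = -T) (hT : ∀ t ∈ T, ∀ j, |t j| ≤ cT)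
    (hc : 0 ≤ cT) {U : Set (Pt n m d)} (hU : U ⊆ ballSet n m d T) (hUne : U.Nonempty)
    {p : ℝ} (hp : 1 ≤ p) {ε : ℝ} (hε : 0 < ε) :
    FA A U ≤ ((d : ℝ) / 2 + 1) * (√p * DeltaA A U + 2 ^ d * sTotal A T p + √p * ε) +
      2 ^ d * sTotal A T p := by
  have hp0 : 0 < p := by linarith
  have hsp : 0 < √p := Real.sqrt_pos.2 hp0
  have hTne : Nonempty T := hne.to_subtype
  obtain ⟨z0, hz0⟩ := hUne
  set b := coefA A T with hbdef
  have hb := abs_coefA_le (A := A) hT hc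
  set σ := 1 / √p with hσdef
  have hσ : 0 < σ := by positivity
  set w : Fin n → ℝ := polyV b (flat z0) ⟨z0.2, (hU hz0).2⟩ with hw
  set N : Finset (PIdx d) → ℝ :=
    fun I => chaosNormT A T ∅ (insert (bigBlock I) (outBlocks I)) with hN
  have hN0 : ∀ I, 0 ≤ N I := fun I => chaosNormT_nonneg hne hsym _ _
  have hΔ : ∀ z ∈ U, rhoA A z0 z ≤ DeltaA A U := fun z hz =>
    le_csSup (bddAbove_rhoA hT hc hU) ⟨z0, hz0, z, hz, rfl⟩
  have hΔ0 : 0 ≤ DeltaA A U := (Real.sqrt_nonneg _).trans (hΔ z0 hz0)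
  set tot := sTotal A T p with htot
  have htot0 : 0 ≤ tot := sTotal_nonneg hne hsym hp0.le
  set r := DeltaA A U + ∑ I ∈ Finset.univ.erase ∅, σ ^ I.card * N I with hr
  have hr0 : 0 ≤ r := add_nonneg hΔ0 (Finset.sum_nonneg fun I _ => mul_nonneg (by positivity) (hN0 I))
  have hcardK : (Fintype.card (Finset (PIdx d)) : ℝ) = 2 ^ d := by
    rw [Fintype.card_finset, card_PIdx]; norm_num
  -- the radius, at the scale of the first term of the bound
  have hrp : √p * r ≤ √p * DeltaA A U + 2 ^ d * tot := by
    rw [hr, mul_add, Finset.mul_sum]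
    gcongr
    calc ∑ I ∈ Finset.univ.erase ∅, √p * (σ ^ I.card * N I)
        ≤ ∑ I ∈ Finset.univ.erase (∅ : Finset (PIdx d)), tot :=
          Finset.sum_le_sum fun I hI => pow_mul_big_le hne hsym hp0 (Finset.ne_of_mem_erase hI)
      _ ≤ ∑ I : Finset (PIdx d), tot :=
          Finset.sum_le_sum_of_subset_of_nonneg (Finset.subset_univ _) fun _ _ _ => htot0
      _ = 2 ^ d * tot := by
          rw [Finset.sum_const, Finset.card_univ, nsmul_eq_mul, hcardK]
  set W : Set ((PIdx d × Fin n → ℝ) × T) := {q | ∃ z, ∃ hz : z ∈ U,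
    q = (flat z, ⟨z.2, (hU hz).2⟩)} with hWdef
  have hrε : 0 < r + ε := by linarith
  have key := integral_sSup_le_of_smoothing (V := polyV b) continuous_polyV (abs_polyV_le hb) w
    (lam := √p / (r + ε)) (σ := σ) (by positivity) hσ W ⟨_, z0, hz0, rfl⟩ (D := d)
    (R := (r + ε) ^ 2) (S := 2 ^ d * tot) (by positivity) (by positivity) (by positivity)
    ?_ (fun q _ i => integrable_polyV σ q.1 q.2 i) (fun q _ i => integral_polyV σ q.1 q.2 i)
    (fun q _ => integrable_polyV_sub_sq σ q.1 q.2 w) ?_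
    (fun q _ => integrable_supMean_affine hb σ q.1) ?_
  · have hFA : FA A U = ∫ g, sSup {s : ℝ | ∃ q ∈ W, s = ∑ i, g i * polyV b q.1 q.2 i}
        ∂_root_.stdGaussian (Fin n) := by
      unfold FA
      congr 1
      funext g
      congr 1
      ext s
      constructor
      · rintro ⟨z, hz, rfl⟩
        exact ⟨_, ⟨z, hz, rfl⟩, sum_mul_polyV_flat z (hU hz).2 g⟩
      · rintro ⟨_, ⟨z, hz, rfl⟩, rfl⟩
        exact ⟨z, hz, (sum_mul_polyV_flat z (hU hz).2 g).symm⟩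
    rw [hFA]
    refine key.trans ?_
    have e1 : (d : ℝ) / (2 * σ ^ 2) / (√p / (r + ε)) = d / 2 * (√p * (r + ε)) := by
      rw [hσdef]
      field_simp
    have e2 : √p / (r + ε) * (r + ε) ^ 2 = √p * (r + ε) := by
      field_simp
    rw [e1, e2]
    have h0 : (d : ℝ) / 2 * (√p * (r + ε)) + √p * (r + ε) =
        ((d : ℝ) / 2 + 1) * (√p * r + √p * ε) := by ring
    rw [h0]
    gcongr
  · rintro _ ⟨z, hz, rfl⟩
    rw [Fintype.sum_prod_type]
    refine (Finset.sum_le_sum (g := fun _ => (1 : ℝ)) fun k _ => (hU hz).1 k).trans ?_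
    simp
  · rintro _ ⟨z, hz, rfl⟩
    rw [integral_polyV_sub_sq]
    have h1 : ∑ i, (polyV b (flat z) ⟨z.2, (hU hz).2⟩ i - w i) ^ 2 ≤ DeltaA A U ^ 2 := by
      rw [← Real.sqrt_le_left hΔ0, ← rhoA_eq z0 z (hU hz0).2 (hU hz).2]
      exact hΔ z hz
    have h2 : ∀ I : Finset (PIdx d),
        σ ^ (2 * I.card) * ∑ i, partQ b (flat z) ⟨z.2, (hU hz).2⟩ I i ≤ (σ ^ I.card * N I) ^ 2 := by
      intro I
      rw [mul_pow, ← pow_mul, mul_comm I.card 2]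
      refine mul_le_mul_of_nonneg_left ?_ (by positivity)
      rw [← Real.sqrt_le_left (hN0 I)]
      exact sqrt_sum_partQ_le hne hsym hT hc I (flat z) (hU hz).1 ⟨z.2, (hU hz).2⟩
    have h3 : ∀ s : Finset (Finset (PIdx d)), s = Finset.univ.erase ∅ →
        DeltaA A U ^ 2 + ∑ I ∈ s, (σ ^ I.card * N I) ^ 2 ≤ (r + ε) ^ 2 := by
      rintro s rfl
      have h4 : 0 ≤ ∑ I ∈ Finset.univ.erase (∅ : Finset (PIdx d)), σ ^ I.card * N I :=
        Finset.sum_nonneg fun I _ => mul_nonneg (by positivity) (hN0 I)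
      have h5 := Finset.sum_sq_le_sq_sum_of_nonneg (s := Finset.univ.erase (∅ : Finset (PIdx d)))
        (f := fun I => σ ^ I.card * N I) fun I _ => mul_nonneg (by positivity) (hN0 I)
      have h6 : r ^ 2 ≤ (r + ε) ^ 2 := pow_le_pow_left₀ hr0 (by linarith) 2
      refine le_trans ?_ h6
      rw [hr]
      nlinarith [mul_nonneg hΔ0 h4]
    exact (add_le_add h1 (Finset.sum_le_sum fun I _ => h2 I)).trans (h3 _ (by ext; simp))
  · rintro _ ⟨z, hz, rfl⟩
    refine (integral_supMean_affine_le hb hσ.le (flat z)).trans ?_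
    rw [← hcardK, ← nsmul_eq_mul, ← Finset.card_univ, ← Finset.sum_const]
    refine Finset.sum_le_sum fun I _ => ?_
    refine le_trans (mul_le_mul_of_nonneg_left ?_ (by positivity)) (pow_mul_in_le hne hsym hp0 I)
    exact integral_supMean_mixV_le hne hT hc hb I (flat z) (hU hz).1

end Assembly

/- Here the chaos is of order `d+1`: the paper's `d` equals `d+1 ≥ 2` below. -/
theorem FA_bound (d : ℕ) (hd : 1 ≤ d) :
    ∃ C : ℝ, 0 < C ∧
      ∀ (n m : ℕ) (A : (Fin (d + 1) → Fin n) → Fin m → ℝ)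
        (T : Set (Fin m → ℝ)), T.Nonempty → Bornology.IsBounded T → T = -T →
        ∀ U : Set (Pt n m d), U ⊆ ballSet n m d T →
        ∀ p : ℝ, 1 ≤ p →
        FA A U ≤ C * (Real.sqrt p * DeltaA A U +
          ∑ k ∈ Finset.range (d + 1),
            p ^ (((k : ℝ) + 1 - (d + 1)) / 2) * sNorm A T k) := by
  refine ⟨((d : ℝ) / 2 + 2) * 2 ^ d, by positivity, ?_⟩
  intro n m A T hne hbd hsym U hU p hp
  change FA A U ≤ _ * (√p * DeltaA A U + sTotal A T p)
  have hp0 : 0 < p := by linarith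
  have htot : 0 ≤ sTotal A T p := sTotal_nonneg hne hsym hp0.le
  have hΔ : 0 ≤ DeltaA A U := Real.sSup_nonneg (by
    rintro _ ⟨z, -, w, -, rfl⟩
    exact Real.sqrt_nonneg _)
  rcases U.eq_empty_or_nonempty with rfl | hUne
  · have : FA A (∅ : Set (Pt n m d)) = 0 := by simp [FA]
    rw [this]
    positivity
  obtain ⟨cT, hcT⟩ := hbd.exists_norm_le
  have hT : ∀ t ∈ T, ∀ j, |t j| ≤ cT := fun t ht j => (norm_le_pi_norm t j).trans (hcT t ht)
  have hc : 0 ≤ cT := (norm_nonneg _).trans (hcT _ hne.some_mem)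
  have h2 : (1 : ℝ) ≤ 2 ^ d := one_le_pow₀ (by norm_num)
  have hd0 : (0 : ℝ) ≤ d := Nat.cast_nonneg d
  have hbase : FA A U ≤ ((d : ℝ) / 2 + 1) * (√p * DeltaA A U + 2 ^ d * sTotal A T p) +
      2 ^ d * sTotal A T p := by
    refine le_of_forall_pos_le_add fun ε hε => ?_
    have h := FA_le_of_pos (A := A) hne hsym hT hc hU hUne hp
      (ε := ε / (((d : ℝ) / 2 + 1) * √p)) (by positivity)
    refine h.trans (le_of_eq ?_)
    field_simp
    ring
  refine hbase.trans ?_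
  have h3 : 0 ≤ √p * DeltaA A U := by positivity
  nlinarith [mul_nonneg (mul_nonneg hd0 h3) (sub_nonneg.2 h2), mul_nonneg h3 (sub_nonneg.2 h2)]
end

section
/- Let (a_i)_{i∈[n]^d} be a real-valued d-indexed array and (g^k_i)_{k∈[d], i∈[n]} i.i.d. standard Gaussian N(0,1) variables. There is a constant C(d) depending only on d such that for every p ≥ 1: (1/C(d)) √p ( Σ_{i∈[n]^d} a_i² )^{1/2} ≤ ( E | Σ_{i∈[n]^d} a_i g^1_{i_1} ⋯ g^d_{i_d} |^p )^{1/p} ≤ C(d) p^{d/2} ( Σ_{i∈[n]^d} a_i² )^{1/2}. -/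
/-!
For `d` layers of Gaussians, condition on all layers but the first: the chaos is then a centred
Gaussian whose standard deviation is the Euclidean norm of the vector `Y` of chaoses of order `d - 1`
attached to the slices of `a` (`lintegral_chaos_succ`).  Hence
`E|X|^p = E|g|^p * E‖Y‖^p`, and both bounds follow by induction on `d`.

* Upper bound, for `p ≥ 2`: Minkowski's inequality in `L^{p/2}` applied to `‖Y‖² = ∑ Y_j²` gives
  `E|X|^p ≤ (E|g|^p)^d ‖a‖^p` (`lintegral_chaos_le`); for `1 ≤ p < 2` compare with `p = 2`.
* Lower bound: `E‖Y‖` is at least the Euclidean norm of `(E|Y_j|)_j` (`lintegral_l2_ge`), so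
  `E|X| ≥ (E|g|)^d ‖a‖`.  Using the factor `E|g|^p` for the first layer only and Jensen's inequality
  for the rest, `(E|X|^p)^{1/p} ≥ (E|g|^p)^{1/p} (E|g|)^{d-1} ‖a‖` (`eLpNorm'_chaos_ge`).

It remains to know that `(E|g|^p)^{1/p}` lies between `e⁻³ √p` and `4 √p` (`absMoment_ge`,
`absMoment_le`), so that `C = e^{3d}` works.  Moments are handled as lower Lebesgue integrals, which
makes integrability questions disappear until the very end.
-/

open MeasureTheory ProbabilityTheory

open scoped ENNReal NNReal

noncomputable section

/-! ### Setup and splitting off one layer of variables -/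

instance stdGaussian_isProb (ι : Type*) [Fintype ι] :
    IsProbabilityMeasure (_root_.stdGaussian ι) := by
  unfold _root_.stdGaussian
  infer_instance

/-- The absolute moment `E|g|^p` of a standard Gaussian, as an extended nonnegative real. -/
def absMoment (p : ℝ) : ℝ≥0∞ := ∫⁻ x, ‖x‖ₑ ^ p ∂gaussianReal 0 1

/-- The decoupled chaos `∑ i, (∏ k, ω (k, i k)) * a i` of order `d`. -/
def chaos {d n : ℕ} (a : (Fin d → Fin n) → ℝ) (ω : Fin d × Fin n → ℝ) : ℝ :=
  ∑ i : Fin d → Fin n, (∏ k, ω (k, i k)) * a i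

/-- The `ℓ²` norm of a finite array. -/
def l2 {ι : Type*} [Fintype ι] (a : ι → ℝ) : ℝ := Real.sqrt (∑ i, a i ^ 2)

/-- The slice of an array obtained by fixing its first index. -/
def slice {d n : ℕ} (a : (Fin (d + 1) → Fin n) → ℝ) (j : Fin n) (i : Fin d → Fin n) : ℝ :=
  a (Fin.cons j i)

/-- Prepends one layer of variables to a family of `d` layers. -/
def glue {d n : ℕ} (q : (Fin n → ℝ) × (Fin d × Fin n → ℝ)) (kj : Fin (d + 1) × Fin n) : ℝ :=
  Fin.cases (motive := fun _ => ℝ) (q.1 kj.2) (fun k => q.2 (k, kj.2)) kj.1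

lemma measurable_glue {d n : ℕ} : Measurable (glue (d := d) (n := n)) := by
  refine measurable_pi_lambda _ fun ⟨k, j⟩ => ?_
  refine Fin.cases ?_ (fun k => ?_) k
  · simp only [glue, Fin.cases_zero]; fun_prop
  · simp only [glue, Fin.cases_succ]; fun_prop

lemma measurePreserving_glue (d n : ℕ) :
    MeasurePreserving (glue (d := d) (n := n))
      ((_root_.stdGaussian (Fin n)).prod (_root_.stdGaussian (Fin d × Fin n)))
      (_root_.stdGaussian (Fin (d + 1) × Fin n)) where
  measurable := measurable_glue
  map_eq := by
    refine (Measure.pi_eq fun s hs => ?_).symm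
    rw [Measure.map_apply measurable_glue (MeasurableSet.univ_pi hs)]
    have : glue (d := d) (n := n) ⁻¹' Set.univ.pi s =
        (Set.univ.pi fun j => s (0, j)) ×ˢ
          (Set.univ.pi fun kj : Fin d × Fin n => s (kj.1.succ, kj.2)) := by
      ext q
      simp [Set.mem_pi, Fin.forall_fin_succ, glue]
    rw [this, Measure.prod_prod, _root_.stdGaussian, _root_.stdGaussian, Measure.pi_pi,
      Measure.pi_pi, Fintype.prod_prod_type, Fintype.prod_prod_type, Fin.prod_univ_succ]

lemma sum_cons {d n : ℕ} (f : (Fin (d + 1) → Fin n) → ℝ) :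
    ∑ i, f i = ∑ j, ∑ i : Fin d → Fin n, f (Fin.cons j i) := by
  rw [← Fintype.sum_prod_type', ← (Fin.consEquiv fun _ => Fin n).sum_comp]
  rfl

lemma l2_sq {ι : Type*} [Fintype ι] (a : ι → ℝ) : l2 a ^ 2 = ∑ i, a i ^ 2 :=
  Real.sq_sqrt (Finset.sum_nonneg fun _ _ => sq_nonneg _)

lemma l2_nonneg {ι : Type*} [Fintype ι] (a : ι → ℝ) : 0 ≤ l2 a := Real.sqrt_nonneg _

lemma l2_slice {d n : ℕ} (a : (Fin (d + 1) → Fin n) → ℝ) :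
    ∑ j, l2 (slice a j) ^ 2 = l2 a ^ 2 := by
  simp only [l2_sq, slice]
  exact (sum_cons fun i => a i ^ 2).symm

lemma chaos_glue {d n : ℕ} (a : (Fin (d + 1) → Fin n) → ℝ)
    (q : (Fin n → ℝ) × (Fin d × Fin n → ℝ)) :
    chaos a (glue q) = ∑ j, chaos (slice a j) q.2 * q.1 j := by
  unfold chaos
  rw [sum_cons]
  refine Finset.sum_congr rfl fun j _ => ?_
  rw [Finset.sum_mul]
  refine Finset.sum_congr rfl fun i _ => ?_
  simp only [Fin.prod_univ_succ, glue, Fin.cases_zero, Fin.cases_succ, Fin.cons_zero,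
    Fin.cons_succ, slice]
  ring

@[fun_prop]
lemma measurable_chaos {d n : ℕ} (a : (Fin d → Fin n) → ℝ) : Measurable (chaos a) := by
  unfold chaos
  fun_prop

/-! ### Integrating out one Gaussian layer -/

/-- A linear form `∑ j, y j * g j` in i.i.d. standard Gaussians has the law of `l2 y * g`. -/
lemma map_linear_form {n : ℕ} (y : Fin n → ℝ) :
    (_root_.stdGaussian (Fin n)).map (fun g => ∑ j, y j * g j) =
      (gaussianReal 0 1).map (fun x => l2 y * x) := by
  have hm : AEMeasurable (fun g : Fin n → ℝ => ∑ j, y j * g j) (_root_.stdGaussian (Fin n)) :=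
    Measurable.aemeasurable (by fun_prop)
  have : IsProbabilityMeasure
      ((_root_.stdGaussian (Fin n)).map (fun g => ∑ j, y j * g j)) :=
    Measure.isProbabilityMeasure_map hm
  have : IsProbabilityMeasure ((gaussianReal 0 1).map (fun x => l2 y * x)) :=
    Measure.isProbabilityMeasure_map (by fun_prop)
  refine Measure.ext_of_charFun ?_
  have hind := iIndepFun_pi (μ := fun _ : Fin n => gaussianReal 0 1)
    (X := fun j x => y j * x) (fun j => by fun_prop)
  rw [_root_.stdGaussian, hind.charFun_map_fun_sum_eq_prod
    fun j => Measurable.aemeasurable (by fun_prop)]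
  ext t
  rw [Finset.prod_apply, charFun_map_mul, charFun_gaussianReal]
  have (j : Fin n) : charFun ((Measure.pi fun _ : Fin n => gaussianReal 0 1).map
      (fun ω => y j * ω j)) t = Complex.exp (-((y j * t : ℝ) : ℂ) ^ 2 / 2) := by
    rw [charFun_map_mul_comp (Measurable.aemeasurable (by fun_prop)), (measurePreserving_eval _ j).map_eq,
      charFun_gaussianReal]
    congr 1
    push_cast
    simp
    ring
  rw [Finset.prod_congr rfl fun j _ => this j, ← Complex.exp_sum]
  congr 1
  have h : ((l2 y * t : ℝ) : ℂ) ^ 2 = ∑ j, ((y j * t : ℝ) : ℂ) ^ 2 := by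
    rw [← Complex.ofReal_pow, mul_pow, l2_sq, Finset.sum_mul]
    push_cast
    simp [mul_pow]
  simp only [h, ← Finset.sum_div, Finset.sum_neg_distrib]
  simp [neg_div]

lemma lintegral_linear_form {n : ℕ} (y : Fin n → ℝ) {p : ℝ} (hp : 0 ≤ p) :
    ∫⁻ g, ‖∑ j, y j * g j‖ₑ ^ p ∂_root_.stdGaussian (Fin n) = absMoment p * ‖l2 y‖ₑ ^ p := by
  have h1 := lintegral_map (μ := _root_.stdGaussian (Fin n)) (f := fun x : ℝ => ‖x‖ₑ ^ p)
    (g := fun g => ∑ j, y j * g j) (by fun_prop) (by fun_prop)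
  rw [← h1, map_linear_form, lintegral_map (by fun_prop) (by fun_prop), absMoment,
    ← lintegral_mul_const _ (by fun_prop)]
  refine lintegral_congr fun x => ?_
  rw [enorm_mul, ENNReal.mul_rpow_of_nonneg _ _ hp, mul_comm]

/-- Integrating out the first layer: conditionally on the others, the chaos is Gaussian. -/
lemma lintegral_chaos_succ {d n : ℕ} (a : (Fin (d + 1) → Fin n) → ℝ) {p : ℝ} (hp : 0 ≤ p) :
    ∫⁻ ω, ‖chaos a ω‖ₑ ^ p ∂_root_.stdGaussian (Fin (d + 1) × Fin n) =
      absMoment p * ∫⁻ ω, ‖l2 fun j => chaos (slice a j) ω‖ₑ ^ p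
        ∂_root_.stdGaussian (Fin d × Fin n) := by
  have hm : Measurable fun ω => ‖chaos a ω‖ₑ ^ p := by fun_prop
  rw [← (measurePreserving_glue d n).lintegral_comp hm,
    lintegral_prod_symm' (fun q => ‖chaos a (glue q)‖ₑ ^ p) (hm.comp measurable_glue),
    ← lintegral_const_mul]
  · refine lintegral_congr fun ω => ?_
    simp only [chaos_glue]
    exact lintegral_linear_form _ hp
  · unfold l2
    fun_prop

lemma lintegral_chaos_zero {n : ℕ} (a : (Fin 0 → Fin n) → ℝ) (p : ℝ) :
    ∫⁻ ω, ‖chaos a ω‖ₑ ^ p ∂_root_.stdGaussian (Fin 0 × Fin n) = ‖l2 a‖ₑ ^ p := by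
  have this (ω : Fin 0 × Fin n → ℝ) : ‖chaos a ω‖ₑ = ‖l2 a‖ₑ := by
    simp [chaos, l2, Real.sqrt_sq_eq_abs]
  simp [this]

/-! ### Bounds in terms of Gaussian moments -/

/-- Upper bound by induction on the order, using Minkowski's inequality in `L^{p/2}`. -/
lemma lintegral_chaos_le {n : ℕ} {p : ℝ} (hp : 2 ≤ p) (d : ℕ) (a : (Fin d → Fin n) → ℝ) :
    ∫⁻ ω, ‖chaos a ω‖ₑ ^ p ∂_root_.stdGaussian (Fin d × Fin n) ≤
      absMoment p ^ d * ‖l2 a‖ₑ ^ p := by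
  have hp0 : 0 < p := by linarith
  induction d with
  | zero => simp [lintegral_chaos_zero]
  | succ d ih =>
    rw [lintegral_chaos_succ a hp0.le, pow_succ', mul_assoc]
    gcongr
    set μ := _root_.stdGaussian (Fin d × Fin n)
    set Y : Fin n → (Fin d × Fin n → ℝ) → ℝ := fun j ω => chaos (slice a j) ω
    have hY (j : Fin n) : Measurable (Y j) := measurable_chaos _
    set M := (absMoment p ^ d) ^ (2 / p)
    have hsq (x : ℝ) : ‖x ^ 2‖ₑ ^ (p / 2) = ‖x‖ₑ ^ p := by
      rw [enorm_pow, ← ENNReal.rpow_natCast, ← ENNReal.rpow_mul]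
      congr 1
      push_cast
      ring
    have hj (j : Fin n) : eLpNorm' (fun ω => Y j ω ^ 2) (p / 2) μ ≤
        M * ‖l2 (slice a j) ^ 2‖ₑ := by
      unfold eLpNorm'
      simp only [hsq]
      calc (∫⁻ ω, ‖Y j ω‖ₑ ^ p ∂μ) ^ (1 / (p / 2))
          ≤ (absMoment p ^ d * ‖l2 (slice a j)‖ₑ ^ p) ^ (1 / (p / 2)) := by
            gcongr
            exact ih (slice a j)
        _ = M * ‖l2 (slice a j) ^ 2‖ₑ := by
            rw [ENNReal.mul_rpow_of_nonneg _ _ (by positivity), ← hsq, ← ENNReal.rpow_mul,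
              mul_one_div_cancel (by positivity), ENNReal.rpow_one, one_div_div]
    have hsum : eLpNorm' (fun ω => l2 (fun j => Y j ω) ^ 2) (p / 2) μ ≤ M * ‖l2 a ^ 2‖ₑ := by
      have heq : (fun ω => l2 (fun j => Y j ω) ^ 2) = ∑ j, fun ω => Y j ω ^ 2 := by
        ext ω
        simp [l2_sq]
      rw [heq]
      refine (eLpNorm'_sum_le (fun j _ => ((hY j).pow_const 2).aestronglyMeasurable)
        (by linarith)).trans ((Finset.sum_le_sum fun j _ => hj j).trans_eq ?_)
      rw [← Finset.mul_sum, ← l2_slice]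
      congr 1
      simp only [Real.enorm_eq_ofReal (sq_nonneg _),
        Real.enorm_eq_ofReal (Finset.sum_nonneg fun _ _ => sq_nonneg _)]
      rw [ENNReal.ofReal_sum_of_nonneg fun _ _ => sq_nonneg _]
    have := ENNReal.rpow_le_rpow hsum (z := p / 2) (by positivity)
    unfold eLpNorm' at this
    rw [← ENNReal.rpow_mul, one_div_mul_cancel (by positivity), ENNReal.rpow_one,
      ENNReal.mul_rpow_of_nonneg _ _ (by positivity), hsq, ← ENNReal.rpow_mul,
      show 2 / p * (p / 2) = 1 by field_simp, ENNReal.rpow_one] at this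
    simpa only [hsq] using this

/-- First-moment lower bound for the Euclidean norm of a random vector, by duality with the
deterministic vector `b`. -/
lemma lintegral_l2_ge {α : Type*} [MeasurableSpace α] (μ : Measure α) {n : ℕ}
    (Y : Fin n → α → ℝ) (hY : ∀ j, Measurable (Y j)) (b : Fin n → ℝ) (hb : ∀ j, 0 ≤ b j) (m : ℝ≥0∞)
    (h : ∀ j, m * ‖b j‖ₑ ≤ ∫⁻ ω, ‖Y j ω‖ₑ ∂μ) :
    m * ‖l2 b‖ₑ ≤ ∫⁻ ω, ‖l2 fun j => Y j ω‖ₑ ∂μ := by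
  by_cases hB : l2 b = 0
  · simp [hB]
  have hB0 : ‖l2 b‖ₑ ≠ 0 := by simpa using hB
  rw [← ENNReal.mul_le_mul_iff_right hB0 enorm_ne_top, ← lintegral_const_mul _
    (by unfold l2; fun_prop)]
  calc ‖l2 b‖ₑ * (m * ‖l2 b‖ₑ) = ∑ j, ‖b j‖ₑ * (m * ‖b j‖ₑ) := by
        have : ‖l2 b‖ₑ ^ 2 = ∑ j, ‖b j‖ₑ ^ 2 := by
          simp only [← enorm_pow]
          rw [l2_sq]
          simp only [Real.enorm_eq_ofReal (sq_nonneg _),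
            Real.enorm_eq_ofReal (Finset.sum_nonneg fun _ _ => sq_nonneg _)]
          rw [ENNReal.ofReal_sum_of_nonneg fun _ _ => sq_nonneg _]
        calc ‖l2 b‖ₑ * (m * ‖l2 b‖ₑ) = m * ‖l2 b‖ₑ ^ 2 := by ring
          _ = _ := by
            rw [this, Finset.mul_sum]
            exact Finset.sum_congr rfl fun j _ => by ring
    _ ≤ ∑ j, ‖b j‖ₑ * ∫⁻ ω, ‖Y j ω‖ₑ ∂μ := by
        gcongr with j
        exact h j
    _ = ∫⁻ ω, ∑ j, ‖b j‖ₑ * ‖Y j ω‖ₑ ∂μ := by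
        rw [lintegral_finsetSum _ fun j _ => by fun_prop]
        exact Finset.sum_congr rfl fun j _ => (lintegral_const_mul _ (by fun_prop)).symm
    _ ≤ ∫⁻ ω, ‖l2 b‖ₑ * ‖l2 fun j => Y j ω‖ₑ ∂μ := by
        refine lintegral_mono fun ω => ?_
        have hcs := Real.sum_mul_le_sqrt_mul_sqrt Finset.univ b (fun j => |Y j ω|)
        simp only [sq_abs] at hcs
        simp only [← enorm_mul]
        rw [Real.enorm_eq_ofReal (mul_nonneg (l2_nonneg _) (l2_nonneg _))]
        refine le_trans (le_of_eq ?_) (ENNReal.ofReal_le_ofReal hcs)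
        rw [ENNReal.ofReal_sum_of_nonneg fun j _ => mul_nonneg (hb j) (abs_nonneg _)]
        exact Finset.sum_congr rfl fun j _ => by
          rw [← Real.enorm_eq_ofReal (mul_nonneg (hb j) (abs_nonneg _)), enorm_mul, enorm_mul,
            Real.enorm_abs]

lemma lintegral_chaos_ge_one {n : ℕ} (d : ℕ) (a : (Fin d → Fin n) → ℝ) :
    absMoment 1 ^ d * ‖l2 a‖ₑ ≤ ∫⁻ ω, ‖chaos a ω‖ₑ ∂_root_.stdGaussian (Fin d × Fin n) := by
  induction d with
  | zero => simpa using (lintegral_chaos_zero a 1).ge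
  | succ d ih =>
    have h := lintegral_chaos_succ a zero_le_one
    simp only [ENNReal.rpow_one] at h
    rw [h, pow_succ', mul_assoc]
    gcongr
    have := lintegral_l2_ge (_root_.stdGaussian (Fin d × Fin n)) (fun j ω => chaos (slice a j) ω)
      (fun j => measurable_chaos _) (fun j => l2 (slice a j)) (fun j => l2_nonneg _) _
      (fun j => ih (slice a j))
    have hl : l2 (fun j => l2 (slice a j)) = l2 a := by
      rw [l2, l2_slice, Real.sqrt_sq (l2_nonneg _)]
    rwa [hl] at this

/-- Only the first layer contributes a `p`-th moment; the others contribute first moments. -/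
lemma eLpNorm'_chaos_ge {n : ℕ} {p : ℝ} (hp : 1 ≤ p) (d : ℕ) (a : (Fin (d + 1) → Fin n) → ℝ) :
    absMoment p ^ (1 / p) * (absMoment 1 ^ d * ‖l2 a‖ₑ) ≤
      eLpNorm' (chaos a) p (_root_.stdGaussian (Fin (d + 1) × Fin n)) := by
  have hp0 : 0 < p := by linarith
  unfold eLpNorm'
  rw [lintegral_chaos_succ a hp0.le, ENNReal.mul_rpow_of_nonneg _ _ (by positivity)]
  gcongr
  have h1 := lintegral_l2_ge (_root_.stdGaussian (Fin d × Fin n))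
      (fun j ω => chaos (slice a j) ω)
      (fun j => measurable_chaos _) (fun j => l2 (slice a j)) (fun j => l2_nonneg _) _
      (fun j => lintegral_chaos_ge_one d (slice a j))
  have hl : l2 (fun j => l2 (slice a j)) = l2 a := by
    rw [l2, l2_slice, Real.sqrt_sq (l2_nonneg _)]
  rw [hl] at h1
  have h2 := eLpNorm'_le_eLpNorm'_of_exponent_le zero_lt_one hp
    (_root_.stdGaussian (Fin d × Fin n))
    (f := fun ω => l2 fun j => chaos (slice a j) ω)
    (by unfold l2; exact Measurable.aestronglyMeasurable (by fun_prop))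
  refine h1.trans (le_trans (le_of_eq ?_) h2)
  simp [eLpNorm']

/-- The exponent is raised to `max p 2` because Minkowski's inequality needs `p / 2 ≥ 1`. -/
lemma eLpNorm'_chaos_le {n : ℕ} {p : ℝ} (hp : 1 ≤ p) (d : ℕ) (a : (Fin d → Fin n) → ℝ) :
    eLpNorm' (chaos a) p (_root_.stdGaussian (Fin d × Fin n)) ≤
      (absMoment (max p 2) ^ (1 / max p 2)) ^ d * ‖l2 a‖ₑ := by
  set q := max p 2 with hq
  have hq0 : 0 < q := by positivity
  refine (eLpNorm'_le_eLpNorm'_of_exponent_le (by linarith) (le_max_left p 2) _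
    (measurable_chaos a).aestronglyMeasurable).trans ?_
  have := ENNReal.rpow_le_rpow (lintegral_chaos_le (le_max_right p 2) d a) (z := 1 / q)
    (by positivity)
  unfold eLpNorm'
  refine this.trans_eq ?_
  rw [ENNReal.mul_rpow_of_nonneg _ _ (by positivity), ← hq, ← ENNReal.rpow_mul,
    mul_one_div_cancel hq0.ne', ENNReal.rpow_one]
  congr 1
  rw [← ENNReal.rpow_natCast, ← ENNReal.rpow_natCast, ← ENNReal.rpow_mul, ← ENNReal.rpow_mul,
    mul_comm]

/-! ### Size of Gaussian moments -/

/-- Follows from `|x|^p ≤ p^{p/2} exp(√p |x|)` and the moment generating function. -/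
lemma absMoment_le {p : ℝ} (hp : 1 ≤ p) :
    absMoment p ^ (1 / p) ≤ ENNReal.ofReal (4 * Real.sqrt p) := by
  have hp0 : 0 < p := by linarith
  set s := Real.sqrt p with hs
  have hs0 : 0 < s := Real.sqrt_pos.2 hp0
  have hss : s * s = p := Real.mul_self_sqrt hp0.le
  have hpt (x : ℝ) : |x| ^ p ≤ s ^ p * (Real.exp (s * x) + Real.exp (-s * x)) := by
    have h1 : |x| ≤ s * Real.exp (|x| / s) := by
      have := Real.add_one_le_exp (|x| / s)
      have h2 : |x| / s ≤ Real.exp (|x| / s) := by linarith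
      rwa [div_le_iff₀' hs0] at h2
    calc |x| ^ p ≤ (s * Real.exp (|x| / s)) ^ p := by gcongr
      _ = s ^ p * Real.exp (s * |x|) := by
        rw [Real.mul_rpow hs0.le (Real.exp_pos _).le, ← Real.exp_mul]
        congr 2
        field_simp
        rw [← hss]
        ring
      _ ≤ _ := by
        gcongr
        rcases abs_cases x with ⟨h, _⟩ | ⟨h, _⟩ <;> rw [h]
        · linarith [Real.exp_pos (-s * x)]
        · rw [mul_neg, ← neg_mul]; linarith [Real.exp_pos (s * x)]
  have hmgf (t : ℝ) : ∫ x, Real.exp (t * x) ∂gaussianReal 0 1 = Real.exp (t ^ 2 / 2) := by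
    have := congrFun (mgf_id_gaussianReal (μ := 0) (v := 1)) t
    simpa [mgf] using this
  have hint : Integrable (fun x => s ^ p * (Real.exp (s * x) + Real.exp (-s * x)))
      (gaussianReal 0 1) :=
    ((integrable_exp_mul_gaussianReal s).add (integrable_exp_mul_gaussianReal (-s))).const_mul _
  have hM : absMoment p ≤ ENNReal.ofReal ((4 * s) ^ p) := by
    calc absMoment p ≤ ∫⁻ x, ENNReal.ofReal (s ^ p * (Real.exp (s * x) + Real.exp (-s * x)))
          ∂gaussianReal 0 1 := by
          refine lintegral_mono fun x => ?_
          rw [Real.enorm_eq_ofReal_abs, ENNReal.ofReal_rpow_of_nonneg (abs_nonneg _) hp0.le]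
          exact ENNReal.ofReal_le_ofReal (hpt x)
      _ = ENNReal.ofReal (s ^ p * (2 * Real.exp (p / 2))) := by
          rw [← ofReal_integral_eq_lintegral_ofReal hint
            (Filter.Eventually.of_forall fun x => by positivity), integral_const_mul,
            integral_add (integrable_exp_mul_gaussianReal s) (integrable_exp_mul_gaussianReal (-s)),
            hmgf, hmgf, neg_sq, pow_two, hss]
          congr 1
          ring
      _ ≤ _ := by
          refine ENNReal.ofReal_le_ofReal ?_
          rw [Real.mul_rpow (by norm_num) hs0.le, mul_comm]
          gcongr
          have h2 : (2 : ℝ) ≤ 2 ^ p := by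
            simpa using Real.rpow_le_rpow_of_exponent_le one_le_two hp
          have h3 : Real.exp (p / 2) ≤ 2 ^ p := by
            have : Real.exp (1 / 2) ≤ 2 := by
              have h := Real.exp_one_lt_d9
              have h' : Real.exp (1 / 2) * Real.exp (1 / 2) = Real.exp 1 := by
                rw [← Real.exp_add]; norm_num
              nlinarith [Real.exp_pos (1 / 2)]
            calc Real.exp (p / 2) = Real.exp (1 / 2) ^ p := by
                  rw [← Real.exp_mul]; congr 1; ring
              _ ≤ 2 ^ p := by gcongr
          calc 2 * Real.exp (p / 2) ≤ 2 ^ p * 2 ^ p := by gcongr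
            _ = 4 ^ p := by rw [← Real.mul_rpow (by norm_num) (by norm_num)]; norm_num
  calc absMoment p ^ (1 / p) ≤ ENNReal.ofReal ((4 * s) ^ p) ^ (1 / p) := by gcongr
    _ = ENNReal.ofReal (4 * s) := by
      rw [← ENNReal.ofReal_rpow_of_nonneg (by positivity) hp0.le, ← ENNReal.rpow_mul,
        mul_one_div_cancel hp0.ne', ENNReal.rpow_one]

/-- The mass of `[√p, √p + 1]` alone already contributes enough to the moment. -/
lemma absMoment_ge {p : ℝ} (hp : 1 ≤ p) :
    ENNReal.ofReal (Real.exp (-3) * Real.sqrt p) ≤ absMoment p ^ (1 / p) := by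
  have hp0 : 0 < p := by linarith
  set s := Real.sqrt p with hs
  have hs1 : 1 ≤ s := Real.one_le_sqrt.2 hp
  have hss : s * s = p := Real.mul_self_sqrt hp0.le
  have hpdf (x : ℝ) (hx : x ∈ Set.Icc s (s + 1)) :
      ENNReal.ofReal (Real.exp (-3) ^ p) ≤ gaussianPDF 0 1 x := by
    refine ENNReal.ofReal_le_ofReal ?_
    have hsqrt : Real.exp (-1) ≤ (Real.sqrt (2 * Real.pi))⁻¹ := by
      rw [Real.exp_neg]
      gcongr
      rw [Real.sqrt_le_left (Real.exp_pos _).le]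
      have := Real.exp_one_gt_d9
      have := Real.pi_lt_d2
      nlinarith
    rw [gaussianPDFReal, ← Real.exp_mul]
    calc Real.exp (-3 * p) = Real.exp (-p) * Real.exp (-2 * p) := by
          rw [← Real.exp_add]; congr 1; ring
      _ ≤ Real.exp (-1) * Real.exp (-(x - 0) ^ 2 / (2 * ((1 : ℝ≥0) : ℝ))) := by
          gcongr
          simp only [NNReal.coe_one]
          nlinarith [hx.1, hx.2]
      _ ≤ _ := by
          gcongr
          simpa using hsqrt
  have hM : ENNReal.ofReal ((Real.exp (-3) * s) ^ p) ≤ absMoment p := by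
    have hmeas : ENNReal.ofReal (Real.exp (-3) ^ p) ≤ gaussianReal 0 1 (Set.Icc s (s + 1)) := by
      rw [gaussianReal_apply _ one_ne_zero]
      calc ENNReal.ofReal (Real.exp (-3) ^ p)
          = ∫⁻ _ in Set.Icc s (s + 1), ENNReal.ofReal (Real.exp (-3) ^ p) := by simp
        _ ≤ _ := setLIntegral_mono (measurable_gaussianPDF _ _) hpdf
    calc ENNReal.ofReal ((Real.exp (-3) * s) ^ p)
        = ENNReal.ofReal (s ^ p) * ENNReal.ofReal (Real.exp (-3) ^ p) := by
          rw [← ENNReal.ofReal_mul (by positivity), Real.mul_rpow (by positivity) (by positivity),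
            mul_comm]
      _ ≤ ENNReal.ofReal (s ^ p) * gaussianReal 0 1 (Set.Icc s (s + 1)) := by gcongr
      _ = ∫⁻ _ in Set.Icc s (s + 1), ENNReal.ofReal (s ^ p) ∂gaussianReal 0 1 := by simp
      _ ≤ ∫⁻ x in Set.Icc s (s + 1), ‖x‖ₑ ^ p ∂gaussianReal 0 1 := by
          refine setLIntegral_mono (by fun_prop) fun x hx => ?_
          rw [Real.enorm_eq_ofReal_abs, ENNReal.ofReal_rpow_of_nonneg (abs_nonneg _) hp0.le]
          refine ENNReal.ofReal_le_ofReal ?_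
          gcongr
          exact hx.1.trans (le_abs_self x)
      _ ≤ absMoment p := setLIntegral_le_lintegral _ _
  calc ENNReal.ofReal (Real.exp (-3) * s)
      = ENNReal.ofReal ((Real.exp (-3) * s) ^ p) ^ (1 / p) := by
        rw [← ENNReal.ofReal_rpow_of_nonneg (by positivity) hp0.le, ← ENNReal.rpow_mul,
          mul_one_div_cancel hp0.ne', ENNReal.rpow_one]
    _ ≤ _ := by gcongr

end

/-! ### Conclusion -/

theorem real_gaussian_chaos_moments (d : ℕ) (hd : 1 ≤ d) :
    ∃ C : ℝ, 0 < C ∧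
      ∀ (n : ℕ) (a : (Fin d → Fin n) → ℝ) (p : ℝ), 1 ≤ p →
        (1 / C) * Real.sqrt p * Real.sqrt (∑ i : Fin d → Fin n, a i ^ 2) ≤
          (∫ ω : Fin d × Fin n → ℝ,
              |∑ i : Fin d → Fin n, (∏ k, ω (k, i k)) * a i| ^ p
            ∂ stdGaussian (Fin d × Fin n)) ^ (1 / p) ∧
        (∫ ω : Fin d × Fin n → ℝ,
              |∑ i : Fin d → Fin n, (∏ k, ω (k, i k)) * a i| ^ p
            ∂ stdGaussian (Fin d × Fin n)) ^ (1 / p) ≤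
          C * p ^ ((d : ℝ) / 2) * Real.sqrt (∑ i : Fin d → Fin n, a i ^ 2) := by
  refine ⟨Real.exp 3 ^ d, by positivity, fun n a p hp => ?_⟩
  have hp0 : 0 < p := by linarith
  change (1 / Real.exp 3 ^ d) * Real.sqrt p * l2 a ≤
      (∫ ω, |chaos a ω| ^ p ∂_root_.stdGaussian (Fin d × Fin n)) ^ (1 / p) ∧
    (∫ ω, |chaos a ω| ^ p ∂_root_.stdGaussian (Fin d × Fin n)) ^ (1 / p) ≤
      Real.exp 3 ^ d * p ^ ((d : ℝ) / 2) * l2 a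
  have hup : eLpNorm' (chaos a) p (_root_.stdGaussian (Fin d × Fin n)) ≤
      ENNReal.ofReal (Real.exp 3 ^ d * p ^ ((d : ℝ) / 2) * l2 a) := by
    have hs : 4 * Real.sqrt (max p 2) ≤ Real.exp 3 * Real.sqrt p := by
      have h1 : Real.sqrt (max p 2) ≤ 2 * Real.sqrt p := by
        rw [Real.sqrt_le_left (by positivity), mul_pow, Real.sq_sqrt hp0.le]
        exact max_le (by linarith) (by linarith)
      have h2 : (8 : ℝ) ≤ Real.exp 3 := by
        have h3 : Real.exp 3 = Real.exp 1 ^ 3 := by rw [← Real.exp_nat_mul]; norm_num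
        have h4 : (2 : ℝ) ≤ Real.exp 1 := by linarith [Real.exp_one_gt_d9]
        rw [h3]
        calc (8 : ℝ) = 2 ^ 3 := by norm_num
          _ ≤ _ := by gcongr
      nlinarith [Real.sqrt_nonneg p]
    have hpow : p ^ ((d : ℝ) / 2) = Real.sqrt p ^ d := by
      rw [Real.sqrt_eq_rpow, ← Real.rpow_natCast, ← Real.rpow_mul hp0.le]
      congr 1
      ring
    refine (eLpNorm'_chaos_le hp d a).trans ?_
    calc (absMoment (max p 2) ^ (1 / max p 2)) ^ d * ‖l2 a‖ₑ
        ≤ ENNReal.ofReal (4 * Real.sqrt (max p 2)) ^ d * ‖l2 a‖ₑ := by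
          gcongr
          exact absMoment_le (hp.trans (le_max_left _ _))
      _ ≤ ENNReal.ofReal (Real.exp 3 * Real.sqrt p) ^ d * ‖l2 a‖ₑ := by gcongr
      _ = _ := by
          rw [hpow, ← mul_pow, ENNReal.ofReal_mul (p := _ ^ d) (by positivity),
            ENNReal.ofReal_pow (by positivity), Real.enorm_eq_ofReal (l2_nonneg _)]
  have hlow : ENNReal.ofReal ((1 / Real.exp 3 ^ d) * Real.sqrt p * l2 a) ≤
      eLpNorm' (chaos a) p (_root_.stdGaussian (Fin d × Fin n)) := by
    obtain ⟨d, rfl⟩ : ∃ e, d = e + 1 := ⟨d - 1, by omega⟩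
    refine le_trans ?_ (eLpNorm'_chaos_ge hp d a)
    have hone := absMoment_ge le_rfl
    simp only [Real.sqrt_one, mul_one, div_one, ENNReal.rpow_one] at hone
    calc ENNReal.ofReal ((1 / Real.exp 3 ^ (d + 1)) * Real.sqrt p * l2 a)
        = ENNReal.ofReal (Real.exp (-3) * Real.sqrt p) *
            (ENNReal.ofReal (Real.exp (-3)) ^ d * ‖l2 a‖ₑ) := by
          rw [Real.enorm_eq_ofReal (l2_nonneg _), ← ENNReal.ofReal_pow (by positivity),
            ← ENNReal.ofReal_mul (by positivity), ← ENNReal.ofReal_mul (by positivity),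
            Real.exp_neg]
          congr 1
          rw [inv_pow, pow_succ]
          field_simp
      _ ≤ _ := by
          gcongr
          exact absMoment_ge hp
  -- The Bochner integral agrees with the lower Lebesgue integral because the latter is finite.
  have hint : (∫ ω, |chaos a ω| ^ p ∂_root_.stdGaussian (Fin d × Fin n)) ^ (1 / p) =
      (eLpNorm' (chaos a) p (_root_.stdGaussian (Fin d × Fin n))).toReal := by
    rw [integral_eq_lintegral_of_nonneg_ae
      (Filter.Eventually.of_forall fun ω => Real.rpow_nonneg (abs_nonneg _) _)
      (Measurable.aestronglyMeasurable (by fun_prop)), eLpNorm', ← ENNReal.toReal_rpow]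
    congr 2
    refine lintegral_congr fun ω => ?_
    rw [Real.enorm_eq_ofReal_abs, ENNReal.ofReal_rpow_of_nonneg (abs_nonneg _) hp0.le]
  have hl := l2_nonneg a
  rw [hint]
  exact ⟨(ENNReal.ofReal_le_iff_le_toReal (ne_top_of_le_ne_top ENNReal.ofReal_ne_top hup)).1 hlow,
    ENNReal.toReal_le_of_le_ofReal (by positivity) hup⟩
end
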